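/- arXiv:1305.6221 — 2 statements merged into one kernel-verified Lean document; each statement's English description precedes it below -/
import Mathlib

section
/- Kahane's convexity inequalities: Let (Ω,F,P) be a probability space, n ≥ 1, and let (A_1,…,A_n) and (B_1,…,B_n) be centered Gaussian vectors (i.e. every finite linear combination Σ_i c_i A_i is a centered Gaussian random variable, and likewise for B) such that E[A_i A_j] ≤ E[B_i B_j] for all 1 ≤ i,j ≤ n. Then for all nonnegative weights p_1,…,p_n and every convex function F : [0,∞) → ℝ of at most polynomial growth at infinity (there exist C, N with |F(x)| ≤ C(1+x^N) for all x ≥ 0), one has E[F(Σ_{i=1}^n p_i e^{A_i − ½E[A_i²]})] ≤ E[F(Σ_{i=1}^n p_i e^{B_i − ½E[B_i²]})]; if instead F is concave of at most polynomial growth, the reverse inequality E[F(Σ p_i e^{A_i − ½E[A_i²]})] ≥ E[F(Σ p_i e^{B_i − ½E[B_i²]})] holds. -/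
open MeasureTheory ProbabilityTheory Filter

noncomputable section

/-- A real random variable is a centered Gaussian if its law is `gaussianReal 0 v`
for some variance `v ≥ 0`. -/
def IsCenteredGaussian {Ω : Type*} [MeasurableSpace Ω] (P : Measure Ω) (Z : Ω → ℝ) : Prop :=
  ∃ v : NNReal, Measure.map Z P = gaussianReal 0 v

/-- A family of real random variables is a centered Gaussian family (vector/process) if every
finite linear combination of its members is a centered Gaussian random variable. -/
def IsCenteredGaussianFamily {Ω : Type*} [MeasurableSpace Ω] (P : Measure Ω)
    {ι : Type*} (Y : ι → Ω → ℝ) : Prop :=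
  ∀ (m : ℕ) (idx : Fin m → ι) (c : Fin m → ℝ),
    IsCenteredGaussian P (fun ω => ∑ i, c i * Y (idx i) ω)

section KahaneHelpers


lemma kh_taylor {Φ Φ1 G : ℝ → ℝ} {L : ℝ} (h0 : ∀ x, HasDerivAt Φ (Φ1 x) x)
    (h1 : ∀ x, HasDerivAt Φ1 (G x) x) (hG : ∀ x y, |G x - G y| ≤ L * |x - y|) (x y : ℝ) :
    |Φ y - Φ x - Φ1 x * (y - x) - G x * (y - x) ^ 2 / 2| ≤ L * |y - x| ^ 3 := by
  have hL : 0 ≤ L := by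
    have := (abs_nonneg _).trans (hG 1 0)
    simpa using this
  have seg : ∀ z t : ℝ, t ∈ segment ℝ x z → |t - x| ≤ |z - x| := by
    intro z t ht
    rw [segment_eq_uIcc] at ht
    rw [abs_sub_comm t x, abs_sub_comm z x]
    simpa [Real.dist_eq] using Real.dist_left_le_of_mem_uIcc ht
  have s1 : ∀ z, |Φ1 z - Φ1 x - G x * (z - x)| ≤ L * |z - x| ^ 2 := by
    intro z
    have := (convex_segment (𝕜 := ℝ) x z).norm_image_sub_le_of_norm_hasDerivWithin_le
      (f := fun t => Φ1 t - G x * t) (f' := fun t => G t - G x) (C := L * |z - x|)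
      (fun t _ => by
        have := (h1 t).sub ((hasDerivAt_id t).const_mul (G x))
        simp only [mul_one] at this
        exact this.hasDerivWithinAt)
      (fun t ht => (hG t x).trans (mul_le_mul_of_nonneg_left (seg z t ht) hL))
      (left_mem_segment ℝ x z) (right_mem_segment ℝ x z)
    simp only [Real.norm_eq_abs] at this
    calc _ = |Φ1 z - G x * z - (Φ1 x - G x * x)| := by congr 1; ring
      _ ≤ _ := this
      _ = _ := by ring
  have := (convex_segment (𝕜 := ℝ) x y).norm_image_sub_le_of_norm_hasDerivWithin_le
      (f := fun t => Φ t - Φ1 x * t - G x * (t - x) ^ 2 / 2)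
      (f' := fun t => Φ1 t - Φ1 x - G x * (t - x)) (C := L * |y - x| ^ 2)
      (fun t _ => by
        have h3 : HasDerivAt (fun t => G x * (t - x) ^ 2 / 2) (G x * (t - x)) t := by
          have := ((((hasDerivAt_id t).sub_const x).pow 2).const_mul (G x)).div_const 2
          refine this.congr_deriv ?_
          simp only [id]; norm_num; ring
        have := ((h0 t).sub ((hasDerivAt_id t).const_mul (Φ1 x))).sub h3
        simp only [mul_one] at this
        exact this.hasDerivWithinAt)
      (fun t ht => (s1 t).trans (by have := seg y t ht; gcongr))
      (left_mem_segment ℝ x y) (right_mem_segment ℝ x y)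
  simp only [Real.norm_eq_abs] at this
  calc _ = |Φ y - Φ1 x * y - G x * (y - x) ^ 2 / 2 - (Φ x - Φ1 x * x - G x * (x - x) ^ 2 / 2)| := by
        congr 1; ring
    _ ≤ _ := this
    _ = _ := by ring

/-- test functions with a second order expansion -/
def KhGood (G : ℝ → ℝ) : Prop :=
  Continuous G ∧ ∃ (g1 g2 : ℝ → ℝ) (K : ℝ), 0 ≤ K ∧ (∀ x, 0 ≤ g2 x) ∧
    ∀ x y, |G y - G x - g1 x * (y - x) - g2 x * (y - x) ^ 2 / 2| ≤ K * |y - x| ^ 3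

lemma kh_smooth {G : ℝ → ℝ} {L : ℝ} (hG : ∀ x y, |G x - G y| ≤ L * |x - y|)
    (hc : ConvexOn ℝ Set.univ G) {ε : ℝ} (hε : 0 < ε) :
    ∃ H, KhGood H ∧ ∀ x, |H x - G x| ≤ ε := by
  have hL : 0 ≤ L := by
    have := (abs_nonneg _).trans (hG 1 0)
    simpa using this
  have hGc : Continuous G := by
    have : LipschitzWith L.toNNReal G := LipschitzWith.of_dist_le_mul fun x y => by
      simpa [Real.dist_eq, Real.coe_toNNReal _ hL] using hG x y
    exact this.continuous
  let Φ1 : ℝ → ℝ := fun x => ∫ t in (0:ℝ)..x, G t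
  have h1 : ∀ x, HasDerivAt Φ1 (G x) x := fun x => hGc.integral_hasStrictDerivAt 0 x |>.hasDerivAt
  have hΦ1c : Continuous Φ1 := continuous_iff_continuousAt.2 fun x => (h1 x).continuousAt
  let Φ : ℝ → ℝ := fun x => ∫ t in (0:ℝ)..x, Φ1 t
  have h0 : ∀ x, HasDerivAt Φ (Φ1 x) x :=
    fun x => hΦ1c.integral_hasStrictDerivAt 0 x |>.hasDerivAt
  have hΦc : Continuous Φ := continuous_iff_continuousAt.2 fun x => (h0 x).continuousAt
  have T := kh_taylor h0 h1 hG
  obtain ⟨δ, hδ, hδL⟩ : ∃ δ : ℝ, 0 < δ ∧ 2 * L * δ ≤ ε := by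
    refine ⟨ε / (2 * L + 1), by positivity, ?_⟩
    rw [mul_div_assoc', div_le_iff₀ (by positivity)]
    nlinarith
  refine ⟨fun x => (Φ (x + δ) - 2 * Φ x + Φ (x - δ)) / δ ^ 2, ⟨by fun_prop,
    fun x => (Φ1 (x + δ) - 2 * Φ1 x + Φ1 (x - δ)) / δ ^ 2,
    fun x => (G (x + δ) - 2 * G x + G (x - δ)) / δ ^ 2, 4 * L / δ ^ 2, by positivity, ?_, ?_⟩, ?_⟩
  · intro x
    have := hc.2 (Set.mem_univ (x + δ)) (Set.mem_univ (x - δ)) 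
      (show (0:ℝ) ≤ 1 / 2 by norm_num) (show (0:ℝ) ≤ 1 / 2 by norm_num) (by norm_num)
    simp only [smul_eq_mul] at this
    rw [show 1 / 2 * (x + δ) + 1 / 2 * (x - δ) = x by ring] at this
    apply div_nonneg _ (by positivity)
    linarith
  · intro x y
    have a := abs_le.1 (T (x + δ) (y + δ))
    have b := abs_le.1 (T x y)
    have c := abs_le.1 (T (x - δ) (y - δ))
    rw [show y + δ - (x + δ) = y - x by ring] at a
    rw [show y - δ - (x - δ) = y - x by ring] at c
    rw [show 4 * L / δ ^ 2 * |y - x| ^ 3 = (4 * (L * |y - x| ^ 3)) / δ ^ 2 by ring]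
    rw [show ∀ a b c d e : ℝ, a / δ ^ 2 - b / δ ^ 2 - c / δ ^ 2 * d - e / δ ^ 2 * d ^ 2 / 2 =
      (a - b - c * d - e * d ^ 2 / 2) / δ ^ 2 by intros; ring]
    rw [abs_div, abs_of_pos (show 0 < δ ^ 2 by positivity)]
    gcongr
    rw [abs_le]
    constructor <;> linarith [a.1, a.2, b.1, b.2, c.1, c.2]
  · intro x
    have a := abs_le.1 (T x (x + δ))
    have b := abs_le.1 (T x (x - δ))
    rw [show x + δ - x = δ by ring, abs_of_pos hδ] at a
    rw [show x - δ - x = -δ by ring, abs_neg, abs_of_pos hδ] at b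
    rw [show ∀ a : ℝ, a / δ ^ 2 - G x = (a - G x * δ ^ 2) / δ ^ 2 by
      intro a; field_simp]
    rw [abs_div, abs_of_pos (show 0 < δ ^ 2 by positivity), div_le_iff₀ (by positivity)]
    have : 2 * L * δ * δ ^ 2 ≤ ε * δ ^ 2 := by gcongr
    rw [abs_le]
    constructor <;> nlinarith [a.1, a.2, b.1, b.2]

lemma kh_tangent {F : ℝ → ℝ} (hF : ConvexOn ℝ (Set.Ici 0) F) {q : ℝ} (hq : 0 < q) :
    ∃ c, ∀ y, 0 < y → F q + c * (y - q) ≤ F y := by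
  have hqi : q ∈ interior (Set.Ici (0:ℝ)) := by simpa using hq
  refine ⟨derivWithin F (Set.Ioi q) q, fun y hy => ?_⟩
  rcases lt_trichotomy y q with h | h | h
  · have h1 := hF.slope_le_leftDeriv_of_mem_interior (x := y) (y := q) (by simpa using hy.le) hqi h
    have h2 := hF.leftDeriv_le_rightDeriv_of_mem_interior hqi
    have h3 := h1.trans h2
    rw [slope_def_field, div_le_iff₀ (by linarith)] at h3
    linarith
  · simp [h]
  · have h1 := hF.rightDeriv_le_slope_of_mem_interior (x := q) (y := y) hqi (by simpa using hy.le) h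
    rw [slope_def_field, le_div_iff₀ (by linarith)] at h1
    linarith

lemma kh_approx {F : ℝ → ℝ} (hF : ConvexOn ℝ (Set.Ici 0) F) :
    ∃ G : ℕ → ℝ → ℝ, (∀ k, ConvexOn ℝ Set.univ (G k)) ∧
      (∀ k, ∃ L : ℝ, ∀ x y, |G k x - G k y| ≤ L * |x - y|) ∧
      (∃ a b : ℝ, ∀ k x, 0 < x → a * x + b ≤ G k x) ∧
      (∀ k x, 0 < x → G k x ≤ F x) ∧
      ∀ x, 0 < x → Tendsto (fun k => G k x) atTop (nhds (F x)) := by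
  have hFc : ContinuousOn F (Set.Ioi 0) := by
    simpa using hF.continuousOn_interior
  obtain ⟨e, he⟩ := exists_surjective_nat {q : ℚ // 0 < q}
  have hpos : ∀ k, (0:ℝ) < ((e k : ℚ) : ℝ) := fun k => by exact_mod_cast (e k).2
  choose c hc using fun k => kh_tangent hF (hpos k)
  let l : ℕ → ℝ → ℝ := fun k x => F (e k : ℚ) + c k * (x - (e k : ℚ))
  have hl : ∀ k x, l k x = F (e k : ℚ) + c k * (x - (e k : ℚ)) := fun _ _ => rfl
  have hsucc : ∀ k, partialSups l (k + 1) = partialSups l k ⊔ l (k + 1) := fun k =>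
    partialSups_add_one l k
  have hle : ∀ k x, 0 < x → partialSups l k x ≤ F x := by
    intro k x hx
    induction k with
    | zero => simpa using hc 0 x hx
    | succ k ih => rw [hsucc]; exact sup_le ih (hc _ x hx)
  refine ⟨fun k => partialSups l k, ?_, ?_, ⟨c 0, F (e 0 : ℚ) - c 0 * (e 0 : ℚ), ?_⟩, hle, ?_⟩
  · have hlc : ∀ k, ConvexOn ℝ Set.univ (l k) := by
      intro k
      refine ⟨convex_univ, fun x _ y _ a b _ _ hab => le_of_eq ?_⟩
      simp only [hl, smul_eq_mul]
      linear_combination (c k * (e k : ℚ) - F (e k : ℚ)) * hab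
    intro k
    induction k with
    | zero => simpa using hlc 0
    | succ k ih =>
      change ConvexOn ℝ Set.univ (partialSups l (k + 1))
      rw [hsucc]; exact ih.sup (hlc _)
  · have hlL : ∀ k x y, |l k x - l k y| ≤ |c k| * |x - y| := by
      intro k x y
      rw [← abs_mul, hl, hl]
      apply le_of_eq; congr 1; ring
    intro k
    induction k with
    | zero => exact ⟨_, by simpa using hlL 0⟩
    | succ k ih =>
      obtain ⟨L, hL⟩ := ih
      refine ⟨max L |c (k + 1)|, fun x y => ?_⟩
      change |partialSups l (k + 1) x - partialSups l (k + 1) y| ≤ _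
      rw [hsucc]
      refine (abs_max_sub_max_le_max _ _ _ _).trans ?_
      rw [max_mul_of_nonneg _ _ (abs_nonneg _)]
      exact max_le_max (hL x y) (hlL _ x y)
  · intro k x _
    have := le_partialSups_of_le l (Nat.zero_le k) x
    rw [hl] at this
    linarith
  · intro x hx
    have hmono : Monotone (fun k => partialSups l k x) := fun i j hij =>
      (partialSups l).monotone hij x
    refine tendsto_order.2 ⟨fun a ha => ?_, fun a ha => Eventually.of_forall fun k =>
      (hle k x hx).trans_lt ha⟩
    suffices ∃ k, a < l k x by
      obtain ⟨k, hk⟩ := this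
      filter_upwards [eventually_ge_atTop k] with j hj
      exact hk.trans_le (le_partialSups_of_le l hj x)
    have ct : Tendsto (fun q => F q + (F q - F (x/2)) / (q - x/2) * (x - q)) (nhds x)
        (nhds (F x + (F x - F (x/2)) / (x - x/2) * (x - x))) := by
      have h1 : ContinuousAt F x := hFc.continuousAt (Ioi_mem_nhds hx)
      have h2 : ContinuousAt (fun q => F q + (F q - F (x/2)) / (q - x/2) * (x - q)) x := by
        have : x - x / 2 ≠ 0 := by linarith
        fun_prop (disch := assumption)
      exact h2
    simp only [sub_self, mul_zero, add_zero] at ct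
    have ev := (ct.eventually_const_lt ha).filter_mono (nhdsWithin_le_nhds (s := Set.Iio x))
    obtain ⟨b, hb, hbx⟩ := (mem_nhdsLT_iff_exists_Ioo_subset' (a := x) (l' := x/2) (by simpa using hx)).1 ev
    have hb' : b < x := hb
    obtain ⟨q, hq1, hq2⟩ := exists_rat_btwn (max_lt hb' (show x/2 < x by linarith))
    have hqb := (le_max_left _ _).trans_lt hq1
    have hqx := (le_max_right _ _).trans_lt hq1
    have hq0 : (0:ℝ) < q := by linarith
    obtain ⟨k, hk⟩ := he ⟨q, by exact_mod_cast hq0⟩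
    refine ⟨k, ?_⟩
    have key := hbx ⟨hqb, hq2⟩
    simp only [Set.mem_ofPred_eq] at key
    refine key.trans_le ?_
    have ht := hc k (x/2) (by linarith)
    rw [hl]
    rw [hk] at ht ⊢
    have : (F q - F (x/2)) / (q - x/2) ≤ c k := by
      rw [div_le_iff₀ (by linarith)]
      simp only at ht; linarith
    have h5 : 0 ≤ x - q := by linarith
    have := mul_le_mul_of_nonneg_right this h5
    simpa using this

open scoped RealInnerProductSpace Matrix

abbrev khM {n : ℕ} (S : Matrix (Fin n) (Fin n) ℝ) : Measure (EuclideanSpace ℝ (Fin n)) :=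
  multivariateGaussian 0 S

lemma kh_map {n : ℕ} {S : Matrix (Fin n) (Fin n) ℝ} (hS : S.PosSemidef)
    (c : EuclideanSpace ℝ (Fin n)) :
    (khM S).map (fun x => ⟪c, x⟫) = gaussianReal 0 (c ⬝ᵥ S *ᵥ c).toNNReal := by
  have h := IsGaussian.map_eq_gaussianReal (μ := khM S) (innerSL ℝ c)
  have h1 : ∫ x, (innerSL ℝ c) x ∂(khM S) = 0 := by
    rw [ContinuousLinearMap.integral_comp_id_comm IsGaussian.integrable_id]
    simp
  have h2 : Var[(innerSL ℝ c); khM S] = c ⬝ᵥ S *ᵥ c := by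
    rw [← covarianceBilin_multivariateGaussian (μ := 0) hS, covarianceBilin_self]
    · rfl
    · exact IsGaussian.memLp_two_id
  rw [h1, h2] at h
  exact h

lemma kh_mgf {n : ℕ} {S : Matrix (Fin n) (Fin n) ℝ} (hS : S.PosSemidef)
    (c : EuclideanSpace ℝ (Fin n)) :
    Integrable (fun x => Real.exp ⟪c, x⟫) (khM S) ∧
    ∫ x, Real.exp ⟪c, x⟫ ∂(khM S) = Real.exp ((c ⬝ᵥ S *ᵥ c) / 2) := by
  have hm := kh_map hS c
  have hnn : 0 ≤ c ⬝ᵥ S *ᵥ c := by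
    simpa using hS.dotProduct_mulVec_nonneg (c : Fin n → ℝ)
  constructor
  · have := integrable_exp_mul_gaussianReal (μ := 0) (v := (c ⬝ᵥ S *ᵥ c).toNNReal) 1
    rw [← hm, integrable_map_measure (by fun_prop) (by fun_prop)] at this
    simpa [Function.comp_def] using this
  · have := mgf_gaussianReal hm 1
    simpa [mgf, Real.coe_toNNReal _ hnn] using this

lemma kh_mgf1 {n : ℕ} {S : Matrix (Fin n) (Fin n) ℝ} (hS : S.PosSemidef) (i : Fin n) (t : ℝ) :
    Integrable (fun x : EuclideanSpace ℝ (Fin n) => Real.exp (t * (x i - S i i / 2))) (khM S) ∧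
    ∫ x : EuclideanSpace ℝ (Fin n), Real.exp (t * (x i - S i i / 2)) ∂(khM S) =
      Real.exp ((t ^ 2 - t) / 2 * S i i) := by
  have h := kh_mgf hS (EuclideanSpace.single i t)
  have e : ∀ x : EuclideanSpace ℝ (Fin n), Real.exp (t * (x i - S i i / 2)) =
      Real.exp ⟪EuclideanSpace.single i t, x⟫ * Real.exp (- t * S i i / 2) := by
    intro x
    rw [← Real.exp_add, EuclideanSpace.inner_single_left]
    congr 1
    simp; ring
  simp_rw [e]
  refine ⟨h.1.mul_const _, ?_⟩
  rw [integral_mul_const, h.2, ← Real.exp_add]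
  congr 1
  simp [dotProduct, Matrix.mulVec]
  ring

lemma kh_mgf2 {n : ℕ} {S : Matrix (Fin n) (Fin n) ℝ} (hS : S.PosSemidef) (i j : Fin n) :
    Integrable (fun x : EuclideanSpace ℝ (Fin n) => Real.exp (x i - S i i / 2) *
      Real.exp (x j - S j j / 2)) (khM S) ∧
    ∫ x : EuclideanSpace ℝ (Fin n), Real.exp (x i - S i i / 2) *
      Real.exp (x j - S j j / 2) ∂(khM S) = Real.exp (S i j) := by
  have h := kh_mgf hS (EuclideanSpace.single i 1 + EuclideanSpace.single j 1)
  have e : ∀ x : EuclideanSpace ℝ (Fin n), Real.exp (x i - S i i / 2) *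
      Real.exp (x j - S j j / 2) =
      Real.exp ⟪EuclideanSpace.single i 1 + EuclideanSpace.single j 1, x⟫ *
        Real.exp (- (S i i + S j j) / 2) := by
    intro x
    rw [← Real.exp_add, ← Real.exp_add, inner_add_left, EuclideanSpace.inner_single_left,
      EuclideanSpace.inner_single_left]
    congr 1
    simp; ring
  simp_rw [e]
  refine ⟨h.1.mul_const _, ?_⟩
  rw [integral_mul_const, h.2, ← Real.exp_add]
  have hs : S j i = S i j := by
    have := hS.1.apply i j
    simpa using this
  congr 1
  simp [dotProduct, Matrix.mulVec, add_mul, mul_add, Finset.sum_add_distrib]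
  linarith

lemma kh_conv {n : ℕ} {S R : Matrix (Fin n) (Fin n) ℝ} (hS : S.PosSemidef) (hR : R.PosSemidef) :
    khM (S + R) = (khM S) ∗ (khM R) := by
  apply Measure.ext_of_charFun
  ext t
  rw [charFun_conv, charFun_multivariateGaussian hS, charFun_multivariateGaussian hR,
    charFun_multivariateGaussian (hS.add hR), ← Complex.exp_add]
  congr 1
  simp [Matrix.add_mulVec]
  ring

/-- the sum -/
def khU {n : ℕ} (S : Matrix (Fin n) (Fin n) ℝ) (q : Fin n → ℝ)
    (x : EuclideanSpace ℝ (Fin n)) : ℝ :=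
  ∑ i, q i * Real.exp (x i - S i i / 2)

lemma khU_cont {n : ℕ} (S : Matrix (Fin n) (Fin n) ℝ) (q : Fin n → ℝ) : Continuous (khU S q) := by
  unfold khU; fun_prop

lemma khU_nonneg {n : ℕ} (S : Matrix (Fin n) (Fin n) ℝ) {q : Fin n → ℝ} (hq : ∀ i, 0 ≤ q i)
    (x : EuclideanSpace ℝ (Fin n)) : 0 ≤ khU S q x :=
  Finset.sum_nonneg fun i _ => mul_nonneg (hq i) (Real.exp_pos _).le

lemma khU_add {n : ℕ} (S R : Matrix (Fin n) (Fin n) ℝ) (q : Fin n → ℝ)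
    (x y : EuclideanSpace ℝ (Fin n)) :
    khU (S + R) q (x + y) = khU R (fun i => q i * Real.exp (x i - S i i / 2)) y := by
  unfold khU
  refine Finset.sum_congr rfl fun i _ => ?_
  rw [mul_assoc, ← Real.exp_add]
  congr 2
  simp; ring

lemma khU_pow_int {n : ℕ} {S : Matrix (Fin n) (Fin n) ℝ} (hS : S.PosSemidef) {q : Fin n → ℝ}
    (hq : ∀ i, 0 ≤ q i) (N : ℕ) : Integrable (fun x => khU S q x ^ N) (khM S) := by
  rcases N with _ | N
  · simp
  have : Integrable (fun x : EuclideanSpace ℝ (Fin n) => ((Finset.univ : Finset (Fin n)).card : ℝ) ^ N *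
      ∑ i, (q i * Real.exp (x i - S i i / 2)) ^ (N + 1)) (khM S) := by
    refine (integrable_finsetSum _ fun i _ => ?_).const_mul _
    simp_rw [mul_pow, ← Real.exp_nat_mul]
    exact (kh_mgf1 hS i _).1.const_mul _
  refine this.mono' (((khU_cont S q).pow _).aestronglyMeasurable) (Eventually.of_forall fun x => ?_)
  rw [Real.norm_of_nonneg (pow_nonneg (khU_nonneg S hq x) _)]
  exact pow_sum_le_card_mul_sum_pow (fun i _ => mul_nonneg (hq i) (Real.exp_pos _).le) N

lemma khU_int {n : ℕ} {S : Matrix (Fin n) (Fin n) ℝ} (hS : S.PosSemidef) {q : Fin n → ℝ}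
    (hq : ∀ i, 0 ≤ q i) {f : ℝ → ℝ} (hf : Continuous f) {C : ℝ} {N : ℕ}
    (hb : ∀ x, 0 ≤ x → |f x| ≤ C * (1 + x ^ N)) :
    Integrable (fun x => f (khU S q x)) (khM S) :=
  (((integrable_const 1).add (khU_pow_int hS hq N)).const_mul C).mono'
    (hf.comp (khU_cont S q)).aestronglyMeasurable
    (Eventually.of_forall fun x => hb _ (khU_nonneg S hq x))

lemma kh_third {n : ℕ} (V : ℝ) (hV : 0 ≤ V) : ∃ C : ℝ, 0 ≤ C ∧
    ∀ (R : Matrix (Fin n) (Fin n) ℝ), R.PosSemidef → ∀ i, ∀ h : ℝ, 0 < h → h ≤ 1 →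
      R i i ≤ h * V →
      Integrable (fun x : EuclideanSpace ℝ (Fin n) => |Real.exp (x i - R i i / 2) - 1| ^ 3) (khM R) ∧
      ∫ x : EuclideanSpace ℝ (Fin n), |Real.exp (x i - R i i / 2) - 1| ^ 3 ∂(khM R) ≤
        C * (h * √h) := by
  refine ⟨(V * Real.exp V + (V * Real.exp V) ^ 2 * (6 * Real.exp V ^ 4)) / 2, by positivity, ?_⟩
  intro R hR i h hh h1 hRi
  set r := R i i with hr
  have hr0 : 0 ≤ r := hR.diag_nonneg
  let e : ℕ → EuclideanSpace ℝ (Fin n) → ℝ := fun k x => Real.exp (x i - r / 2) ^ k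
  have he : ∀ k, Integrable (e k) (khM R) ∧
      ∫ x, e k x ∂(khM R) = Real.exp (((k:ℝ) ^ 2 - k) / 2 * r) := by
    intro k
    have := kh_mgf1 hR i k
    simp_rw [Real.exp_nat_mul] at this
    exact this
  let d : EuclideanSpace ℝ (Fin n) → ℝ := fun x => Real.exp (x i - r / 2) - 1
  have d2 : (fun x => d x ^ 2) = fun x => e 2 x - 2 * e 1 x + 1 := by
    funext x; simp only [d, e]; ring
  have d4 : (fun x => d x ^ 4) = fun x => e 4 x - 4 * e 3 x + 6 * e 2 x - 4 * e 1 x + 1 := by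
    funext x; simp only [d, e]; ring
  have i1 := (he 1).1
  have i2 := (he 2).1
  have i3 := (he 3).1
  have i4 := (he 4).1
  have I2 : Integrable (fun x => d x ^ 2) (khM R) := by rw [d2]; fun_prop
  have I4 : Integrable (fun x => d x ^ 4) (khM R) := by rw [d4]; fun_prop
  have u1 : Real.exp (r * 3) = Real.exp r ^ 3 := by rw [← Real.exp_nat_mul]; congr 1; push_cast; ring
  have u2 : Real.exp (r * 6) = Real.exp r ^ 6 := by rw [← Real.exp_nat_mul]; congr 1; push_cast; ring
  have E2 : ∫ x, d x ^ 2 ∂(khM R) = Real.exp r - 1 := by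
    rw [d2, integral_add (by fun_prop) (by fun_prop), integral_sub (by fun_prop) (by fun_prop),
      integral_const_mul, (he 1).2, (he 2).2]
    norm_num
    ring
  have E4 : ∫ x, d x ^ 4 ∂(khM R) = (Real.exp r - 1) ^ 2 *
      (Real.exp r ^ 4 + 2 * Real.exp r ^ 3 + 3 * Real.exp r ^ 2 - 3) := by
    rw [d4, integral_add (by fun_prop) (by fun_prop), integral_sub (by fun_prop) (by fun_prop),
      integral_add (by fun_prop) (by fun_prop), integral_sub (by fun_prop) (by fun_prop),
      integral_const_mul, integral_const_mul, integral_const_mul,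
      (he 1).2, (he 2).2, (he 3).2, (he 4).2]
    norm_num
    rw [mul_comm 6 r, mul_comm 3 r, u1, u2]
    ring
  have hs : 0 < √h := Real.sqrt_pos.2 hh
  have hss : √h * √h = h := Real.mul_self_sqrt hh.le
  have pt : ∀ x, |d x| ^ 3 ≤ √h / 2 * d x ^ 2 + 1 / (2 * √h) * d x ^ 4 := by
    intro x
    have a2 : d x ^ 2 = |d x| ^ 2 := (sq_abs _).symm
    have a4 : d x ^ 4 = |d x| ^ 4 := by rw [show 4 = 2 * 2 by rfl, pow_mul, pow_mul, sq_abs]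
    rw [a2, a4, ← sub_nonneg]
    have : √h / 2 * |d x| ^ 2 + 1 / (2 * √h) * |d x| ^ 4 - |d x| ^ 3 =
      |d x| ^ 2 * (√h - |d x|) ^ 2 / (2 * √h) := by field_simp; ring
    rw [this]; positivity
  have I3 : Integrable (fun x => |d x| ^ 3) (khM R) := by
    refine ((I2.const_mul (√h / 2)).add (I4.const_mul (1 / (2 * √h)))).mono'
      (Continuous.aestronglyMeasurable (by fun_prop)) (Eventually.of_forall fun x => ?_)
    rw [Real.norm_of_nonneg (by positivity)]
    exact pt x
  refine ⟨I3, ?_⟩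
  have main := integral_mono I3 ((I2.const_mul (√h / 2)).add (I4.const_mul (1 / (2 * √h)))) pt
  simp only [Pi.add_apply] at main
  rw [integral_add (I2.const_mul _) (I4.const_mul _), integral_const_mul, integral_const_mul,
    E2, E4] at main
  refine main.trans ?_
  have hrV : r ≤ V := hRi.trans (by nlinarith)
  have hu : Real.exp r ≤ Real.exp V := Real.exp_le_exp.2 hrV
  have hu1 : 1 ≤ Real.exp r := Real.one_le_exp hr0
  have hur : Real.exp r - 1 ≤ h * (V * Real.exp V) := by
    have := Real.add_one_le_exp (-r)
    have h3 : Real.exp (-r) * Real.exp r = 1 := by rw [← Real.exp_add]; simp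
    calc Real.exp r - 1 ≤ r * Real.exp r := by nlinarith [Real.exp_pos r]
      _ ≤ (h * V) * Real.exp V := by gcongr
      _ = _ := by ring
  have hq : Real.exp r ^ 4 + 2 * Real.exp r ^ 3 + 3 * Real.exp r ^ 2 - 3 ≤ 6 * Real.exp V ^ 4 := by
    have a : Real.exp r ^ 4 ≤ Real.exp V ^ 4 := by gcongr
    have b : Real.exp r ^ 3 ≤ Real.exp r ^ 4 := pow_le_pow_right₀ hu1 (by norm_num)
    have c : Real.exp r ^ 2 ≤ Real.exp r ^ 4 := pow_le_pow_right₀ hu1 (by norm_num)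
    linarith
  have t2 : (Real.exp r - 1) ^ 2 *
      (Real.exp r ^ 4 + 2 * Real.exp r ^ 3 + 3 * Real.exp r ^ 2 - 3) ≤
      (h * (V * Real.exp V)) ^ 2 * (6 * Real.exp V ^ 4) := by
    have : 0 ≤ Real.exp r - 1 := by linarith
    calc _ ≤ (Real.exp r - 1) ^ 2 * (6 * Real.exp V ^ 4) := by gcongr
      _ ≤ _ := by gcongr
  calc _ ≤ √h / 2 * (h * (V * Real.exp V)) + 1 / (2 * √h) *
        ((h * (V * Real.exp V)) ^ 2 * (6 * Real.exp V ^ 4)) := by gcongr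
    _ = _ := by
      have : 1 / (2 * √h) * ((h * (V * Real.exp V)) ^ 2 * (6 * Real.exp V ^ 4)) =
        (h * h / √h) * ((V * Real.exp V) ^ 2 * (6 * Real.exp V ^ 4)) / 2 := by field_simp
      rw [this]
      have : h * h / √h = h * √h := by
        rw [div_eq_iff hs.ne', mul_assoc, hss]
      rw [this]; ring

lemma KhGood.growth {G : ℝ → ℝ} (hG : KhGood G) :
    ∃ C : ℝ, ∀ x, 0 ≤ x → |G x| ≤ C * (1 + x ^ 3) := by
  obtain ⟨_, g1, g2, K, hK, hg2, T⟩ := hG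
  refine ⟨|G 0| + |g1 0| + g2 0 + K, fun x hx => ?_⟩
  have t := T 0 x
  simp only [sub_zero, abs_of_nonneg hx] at t
  have t' := abs_le.1 t
  have hx1 : x ≤ 1 + x ^ 3 := by
    rcases le_total x 1 with h | h
    · nlinarith [pow_nonneg hx 3]
    · nlinarith [mul_nonneg hx (sub_nonneg.2 h), mul_nonneg (mul_nonneg hx hx) (sub_nonneg.2 h)]
  have hx2 : x ^ 2 ≤ 1 + x ^ 3 := by
    rcases le_total x 1 with h | h
    · nlinarith [pow_nonneg hx 3]
    · nlinarith [mul_nonneg (mul_nonneg hx hx) (sub_nonneg.2 h)]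
  have hx3 : 1 ≤ 1 + x ^ 3 := by linarith [pow_nonneg hx 3]
  have a0 : |G 0| * 1 ≤ |G 0| * (1 + x ^ 3) := by gcongr
  have a1 : |g1 0| * x ≤ |g1 0| * (1 + x ^ 3) := by gcongr
  have a2 : g2 0 * x ^ 2 ≤ g2 0 * (1 + x ^ 3) := mul_le_mul_of_nonneg_left hx2 (hg2 0)
  have a3 : K * x ^ 3 ≤ K * (1 + x ^ 3) := by gcongr; linarith
  have a4 : 0 ≤ g2 0 * x ^ 2 := mul_nonneg (hg2 0) (by positivity)
  have b1 : |g1 0 * x| = |g1 0| * x := by rw [abs_mul, abs_of_nonneg hx]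
  have b1' := abs_le.1 b1.le
  have b0 := abs_le.1 (le_refl |G 0|)
  rw [abs_le]
  constructor <;> linarith [t'.1, t'.2, b1'.1, b1'.2, b0.1, b0.2]

lemma khU_mean {n : ℕ} {S : Matrix (Fin n) (Fin n) ℝ} (hS : S.PosSemidef) (q : Fin n → ℝ) :
    ∫ x, khU S q x ∂(khM S) = ∑ i, q i := by
  have h : ∀ i, Integrable (fun x : EuclideanSpace ℝ (Fin n) => Real.exp (x i - S i i / 2)) (khM S) ∧
      ∫ x : EuclideanSpace ℝ (Fin n), Real.exp (x i - S i i / 2) ∂(khM S) = 1 := by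
    intro i
    simpa using kh_mgf1 hS i 1
  unfold khU
  rw [integral_finsetSum _ fun i _ => (h i).1.const_mul _]
  refine Finset.sum_congr rfl fun i _ => ?_
  rw [integral_const_mul, (h i).2, mul_one]

lemma khU_sq {n : ℕ} {S : Matrix (Fin n) (Fin n) ℝ} (hS : S.PosSemidef) (q : Fin n → ℝ) :
    ∫ x, khU S q x ^ 2 ∂(khM S) = ∑ i, ∑ j, q i * q j * Real.exp (S i j) := by
  have e : ∀ x, khU S q x ^ 2 = ∑ i, ∑ j, q i * q j *
      (Real.exp (x i - S i i / 2) * Real.exp (x j - S j j / 2)) := by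
    intro x
    rw [khU, sq, Finset.sum_mul_sum]
    refine Finset.sum_congr rfl fun i _ => Finset.sum_congr rfl fun j _ => by ring
  simp_rw [e]
  rw [integral_finsetSum _ fun i _ => integrable_finsetSum _ fun j _ =>
    (kh_mgf2 hS i j).1.const_mul _]
  refine Finset.sum_congr rfl fun i _ => ?_
  rw [integral_finsetSum _ fun j _ => (kh_mgf2 hS i j).1.const_mul _]
  refine Finset.sum_congr rfl fun j _ => ?_
  rw [integral_const_mul, (kh_mgf2 hS i j).2]

lemma khU_third {n : ℕ} (V : ℝ) (hV : 0 ≤ V) : ∃ C : ℝ, 0 ≤ C ∧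
    ∀ (R : Matrix (Fin n) (Fin n) ℝ), R.PosSemidef → ∀ h : ℝ, 0 < h → h ≤ 1 →
      (∀ i, R i i ≤ h * V) → ∀ q : Fin n → ℝ, (∀ i, 0 ≤ q i) →
      Integrable (fun x => |khU R q x - ∑ i, q i| ^ 3) (khM R) ∧
      ∫ x, |khU R q x - ∑ i, q i| ^ 3 ∂(khM R) ≤ C * (h * √h) * ∑ i, q i ^ 3 := by
  obtain ⟨C, hC, H⟩ := kh_third (n := n) V hV
  refine ⟨((Finset.univ : Finset (Fin n)).card : ℝ) ^ 2 * C, by positivity, ?_⟩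
  intro R hR h hh h1 hRi q hq
  have T := fun i => H R hR i h hh h1 (hRi i)
  have pt : ∀ x, |khU R q x - ∑ i, q i| ^ 3 ≤ ((Finset.univ : Finset (Fin n)).card : ℝ) ^ 2 *
      ∑ i, q i ^ 3 * |Real.exp (x i - R i i / 2) - 1| ^ 3 := by
    intro x
    have e : khU R q x - ∑ i, q i = ∑ i, q i * (Real.exp (x i - R i i / 2) - 1) := by
      rw [khU, ← Finset.sum_sub_distrib]
      exact Finset.sum_congr rfl fun i _ => by ring
    rw [e]
    calc _ ≤ (∑ i, q i * |Real.exp (x i - R i i / 2) - 1|) ^ 3 := by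
          gcongr
          refine (Finset.abs_sum_le_sum_abs _ _).trans (le_of_eq ?_)
          exact Finset.sum_congr rfl fun i _ => by rw [abs_mul, abs_of_nonneg (hq i)]
      _ ≤ _ := pow_sum_le_card_mul_sum_pow
          (fun i _ => mul_nonneg (hq i) (abs_nonneg _)) 2
      _ = _ := by simp_rw [mul_pow]
  have I : Integrable (fun x : EuclideanSpace ℝ (Fin n) =>
      ((Finset.univ : Finset (Fin n)).card : ℝ) ^ 2 *
      ∑ i, q i ^ 3 * |Real.exp (x i - R i i / 2) - 1| ^ 3) (khM R) :=
    (integrable_finsetSum _ fun i _ => (T i).1.const_mul _).const_mul _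
  have I3 : Integrable (fun x => |khU R q x - ∑ i, q i| ^ 3) (khM R) := by
    have := khU_cont R q
    refine I.mono' (Continuous.aestronglyMeasurable (by fun_prop)) (Eventually.of_forall fun x => ?_)
    rw [Real.norm_of_nonneg (by positivity)]
    exact pt x
  refine ⟨I3, (integral_mono I3 I pt).trans ?_⟩
  rw [integral_const_mul, integral_finsetSum _ fun i _ => (T i).1.const_mul _]
  simp_rw [integral_const_mul]
  have hsum : ∑ i, q i ^ 3 * ∫ x : EuclideanSpace ℝ (Fin n),
      |Real.exp (x i - R i i / 2) - 1| ^ 3 ∂(khM R) ≤ C * (h * √h) * ∑ i, q i ^ 3 := by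
    rw [Finset.mul_sum]
    refine Finset.sum_le_sum fun i _ => ?_
    rw [mul_comm (C * (h * √h))]
    exact mul_le_mul_of_nonneg_left (T i).2 (pow_nonneg (hq i) 3)
  rw [mul_assoc, mul_assoc, ← mul_assoc C]
  exact mul_le_mul_of_nonneg_left hsum (by positivity)

lemma kh_step {n : ℕ} {G : ℝ → ℝ} (hG : KhGood G) {A B : Matrix (Fin n) (Fin n) ℝ}
    (hA : A.PosSemidef) (hB : B.PosSemidef) (hAB : ∀ i j, A i j ≤ B i j) {V : ℝ} (hV : 0 ≤ V)
    (hBV : ∀ i, B i i ≤ V) :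
    ∃ C : ℝ, 0 ≤ C ∧ ∀ h : ℝ, 0 < h → h ≤ 1 → ∀ q : Fin n → ℝ, (∀ i, 0 ≤ q i) →
      ∫ x, G (khU (h • A) q x) ∂(khM (h • A)) ≤ ∫ x, G (khU (h • B) q x) ∂(khM (h • B)) +
        C * (h * √h) * ∑ i, q i ^ 3 := by
  obtain ⟨CG, hgr⟩ := hG.growth
  obtain ⟨hGc, g1, g2, K, hK, hg2, T⟩ := hG
  obtain ⟨C, hC, H⟩ := khU_third (n := n) V hV
  refine ⟨2 * (K * C), by positivity, ?_⟩
  intro h hh h1 q hq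
  set m := ∑ i, q i with hm
  -- expansion for either matrix
  have key : ∀ R : Matrix (Fin n) (Fin n) ℝ, R.PosSemidef → (∀ i, R i i ≤ h * V) →
      |∫ x, G (khU R q x) ∂(khM R) - (G m + g2 m / 2 *
        ((∑ i, ∑ j, q i * q j * Real.exp (R i j)) - m ^ 2))| ≤ K * (C * (h * √h) * ∑ i, q i ^ 3) := by
    intro R hR hRV
    obtain ⟨I3, H3⟩ := H R hR h hh h1 hRV q hq
    have IG := khU_int hR hq hGc hgr
    have IU : Integrable (fun x => khU R q x) (khM R) := by simpa using khU_pow_int hR hq 1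
    have IU2 := khU_pow_int hR hq 2
    have e : ∀ x, G (khU R q x) - G m - g1 m * (khU R q x - m) -
      g2 m * (khU R q x - m) ^ 2 / 2 = G (khU R q x) - g2 m / 2 * khU R q x ^ 2
        - (g1 m - g2 m * m) * khU R q x - (G m - g1 m * m + g2 m * m ^ 2 / 2) := by
      intro x; ring
    have J1 : Integrable (fun x => G (khU R q x) - g2 m / 2 * khU R q x ^ 2) (khM R) := IG.sub (IU2.const_mul (g2 m / 2))
    have J2 : Integrable (fun x => G (khU R q x) - g2 m / 2 * khU R q x ^ 2 -
        (g1 m - g2 m * m) * khU R q x) (khM R) := J1.sub (IU.const_mul (g1 m - g2 m * m))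
    have eq : ∫ x, (G (khU R q x) - G m - g1 m * (khU R q x - m) -
        g2 m * (khU R q x - m) ^ 2 / 2) ∂(khM R) = ∫ x, G (khU R q x) ∂(khM R) - (G m + g2 m / 2 *
        ((∑ i, ∑ j, q i * q j * Real.exp (R i j)) - m ^ 2)) := by
      simp_rw [e]
      rw [integral_sub J2 (integrable_const _), integral_sub J1 (IU.const_mul _),
        integral_sub IG (IU2.const_mul _), integral_const_mul, integral_const_mul,
        khU_sq hR, khU_mean hR, ← hm]
      simp
      ring
    rw [← eq]
    refine (abs_integral_le_integral_abs).trans ?_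
    calc _ ≤ ∫ x, K * |khU R q x - m| ^ 3 ∂(khM R) := by
          refine integral_mono (Integrable.abs ?_) (I3.const_mul K) fun x => T m (khU R q x)
          simp_rw [e]
          exact J2.sub (integrable_const _)
      _ ≤ _ := by rw [integral_const_mul]; gcongr
  have kA := abs_le.1 (key (h • A) (hA.smul hh.le) fun i => by
    simpa using mul_le_mul_of_nonneg_left ((hAB i i).trans (hBV i)) hh.le)
  have kB := abs_le.1 (key (h • B) (hB.smul hh.le) fun i => by
    simpa using mul_le_mul_of_nonneg_left (hBV i) hh.le)
  have hvar : (∑ i, ∑ j, q i * q j * Real.exp ((h • A) i j)) ≤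
      ∑ i, ∑ j, q i * q j * Real.exp ((h • B) i j) := by
    refine Finset.sum_le_sum fun i _ => Finset.sum_le_sum fun j _ => ?_
    refine mul_le_mul_of_nonneg_left (Real.exp_le_exp.2 ?_) (mul_nonneg (hq i) (hq j))
    simpa using mul_le_mul_of_nonneg_left (hAB i j) hh.le
  have := mul_le_mul_of_nonneg_left (sub_le_sub_right hvar (m ^ 2)) (div_nonneg (hg2 m) (zero_le_two (α := ℝ)))
  linarith [kA.1, kA.2, kB.1, kB.2]

lemma kh_disint {n : ℕ} {S R : Matrix (Fin n) (Fin n) ℝ} (hS : S.PosSemidef) (hR : R.PosSemidef)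
    {p : Fin n → ℝ} (hp : ∀ i, 0 ≤ p i) {G : ℝ → ℝ} (hG : KhGood G) :
    Integrable (fun x : EuclideanSpace ℝ (Fin n) =>
      ∫ y, G (khU R (fun i => p i * Real.exp (x i - S i i / 2)) y) ∂(khM R)) (khM S) ∧
    ∫ x, G (khU (S + R) p x) ∂(khM (S + R)) =
      ∫ x : EuclideanSpace ℝ (Fin n), ∫ y, G (khU R (fun i => p i * Real.exp (x i - S i i / 2)) y)
        ∂(khM R) ∂(khM S) := by
  obtain ⟨C, hgr⟩ := hG.growth
  have I := khU_int (hS.add hR) hp hG.1 hgr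
  simp_rw [← khU_add]
  rw [kh_conv hS hR] at I ⊢
  refine ⟨?_, integral_conv I⟩
  rw [Measure.conv, integrable_map_measure (by
    have := khU_cont (S + R) p
    exact (hG.1.comp this).aestronglyMeasurable) (by fun_prop)] at I
  exact I.integral_prod_left

lemma kh_step2 {n : ℕ} {G : ℝ → ℝ} (hG : KhGood G) {A B : Matrix (Fin n) (Fin n) ℝ}
    (hA : A.PosSemidef) (hB : B.PosSemidef) (hAB : ∀ i j, A i j ≤ B i j) {V : ℝ} (hV : 0 ≤ V)
    (hBV : ∀ i, B i i ≤ V) {p : Fin n → ℝ} (hp : ∀ i, 0 ≤ p i) :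
    ∃ C : ℝ, 0 ≤ C ∧ ∀ S : Matrix (Fin n) (Fin n) ℝ, S.PosSemidef → (∀ i, S i i ≤ V) →
      ∀ h : ℝ, 0 < h → h ≤ 1 →
      ∫ x, G (khU (S + h • A) p x) ∂(khM (S + h • A)) ≤
        ∫ x, G (khU (S + h • B) p x) ∂(khM (S + h • B)) + C * (h * √h) := by
  obtain ⟨C, hC, H⟩ := kh_step hG hA hB hAB hV hBV
  refine ⟨C * ∑ i, p i ^ 3 * Real.exp (3 * V),
    mul_nonneg hC (Finset.sum_nonneg fun i _ => mul_nonneg (pow_nonneg (hp i) 3) (Real.exp_pos _).le),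
    ?_⟩
  intro S hS hSV h hh h1
  obtain ⟨IA, EA⟩ := kh_disint hS (hA.smul hh.le) hp hG
  obtain ⟨IB, EB⟩ := kh_disint hS (hB.smul hh.le) hp hG
  rw [EA, EB]
  have h3 : ∀ i, Integrable (fun x : EuclideanSpace ℝ (Fin n) =>
      (p i * Real.exp (x i - S i i / 2)) ^ 3) (khM S) ∧
      ∫ x : EuclideanSpace ℝ (Fin n), (p i * Real.exp (x i - S i i / 2)) ^ 3 ∂(khM S) ≤
        p i ^ 3 * Real.exp (3 * V) := by
    intro i
    have := kh_mgf1 hS i (3 : ℕ)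
    simp_rw [mul_pow, ← Real.exp_nat_mul]
    refine ⟨this.1.const_mul _, ?_⟩
    rw [integral_const_mul, this.2]
    refine mul_le_mul_of_nonneg_left (Real.exp_le_exp.2 ?_) (pow_nonneg (hp i) 3)
    norm_num
    exact hSV i
  have I3 : Integrable (fun x : EuclideanSpace ℝ (Fin n) =>
      ∑ i, (p i * Real.exp (x i - S i i / 2)) ^ 3) (khM S) :=
    integrable_finsetSum _ fun i _ => (h3 i).1
  refine (integral_mono IA (IB.add (I3.const_mul (C * (h * √h)))) fun x =>
    H h hh h1 _ fun i => mul_nonneg (hp i) (Real.exp_pos _).le).trans ?_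
  simp only [Pi.add_apply]
  rw [integral_add IB (I3.const_mul _), integral_const_mul, integral_finsetSum _ fun i _ => (h3 i).1]
  have : ∑ i, ∫ x : EuclideanSpace ℝ (Fin n), (p i * Real.exp (x i - S i i / 2)) ^ 3 ∂(khM S) ≤
      ∑ i, p i ^ 3 * Real.exp (3 * V) := Finset.sum_le_sum fun i _ => (h3 i).2
  have h4 : 0 ≤ C * (h * √h) := by positivity
  have := mul_le_mul_of_nonneg_left this h4
  linarith

lemma kh_good {n : ℕ} {G : ℝ → ℝ} (hG : KhGood G) {A B : Matrix (Fin n) (Fin n) ℝ}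
    (hA : A.PosSemidef) (hB : B.PosSemidef) (hAB : ∀ i j, A i j ≤ B i j)
    {p : Fin n → ℝ} (hp : ∀ i, 0 ≤ p i) :
    ∫ x, G (khU A p x) ∂(khM A) ≤ ∫ x, G (khU B p x) ∂(khM B) := by
  set V : ℝ := ∑ i, B i i with hVd
  have hV : 0 ≤ V := Finset.sum_nonneg fun i _ => hB.diag_nonneg
  have hBV : ∀ i, B i i ≤ V := fun i =>
    Finset.single_le_sum (f := fun i => B i i) (fun j _ => hB.diag_nonneg) (Finset.mem_univ i)
  obtain ⟨C, hC, H⟩ := kh_step2 hG hA hB hAB hV hBV hp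
  have main : ∀ N : ℕ, ∫ x, G (khU A p x) ∂(khM A) ≤ ∫ x, G (khU B p x) ∂(khM B) +
      C * √(1 / ((N : ℝ) + 1)) := by
    intro N
    set h : ℝ := 1 / ((N : ℝ) + 1) with hh
    have h0 : 0 < h := by positivity
    have h1 : h ≤ 1 := by rw [hh, div_le_one (by positivity)]; linarith [Nat.cast_nonneg (α := ℝ) N]
    have hN : h * ((N : ℝ) + 1) = 1 := by rw [hh]; field_simp
    have ind : ∀ k : ℕ, k ≤ N + 1 → ∫ x, G (khU A p x) ∂(khM A) ≤
        ∫ x, G (khU ((1 - k * h) • A + (k * h) • B) p x) ∂(khM ((1 - k * h) • A + (k * h) • B)) +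
          k * (C * (h * √h)) := by
      intro k
      induction k with
      | zero => simp
      | succ k ih =>
        intro hk
        refine (ih (by omega)).trans ?_
        have hk' : (k : ℝ) + 1 ≤ N + 1 := by exact_mod_cast hk
        have c1 : 0 ≤ 1 - (k + 1) * h := by nlinarith
        have c2 : 0 ≤ k * h := by positivity
        have := H ((1 - (k + 1) * h) • A + (k * h) • B) ((hA.smul c1).add (hB.smul c2)) (by
          intro i
          simp only [Matrix.add_apply, Matrix.smul_apply, smul_eq_mul]
          have := (hAB i i).trans (hBV i)
          calc _ ≤ (1 - (k + 1) * h) * V + k * h * V := by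
                have := hBV i
                gcongr
            _ = (1 - h) * V := by ring
            _ ≤ V := by nlinarith) h h0 h1
        have e1 : (1 - (k + 1) * h) • A + (k * h) • B + h • A = (1 - k * h) • A + (k * h) • B := by
          ext i j
          simp only [Matrix.add_apply, Matrix.smul_apply, smul_eq_mul]; ring
        have e2 : (1 - (k + 1) * h) • A + (k * h) • B + h • B =
            (1 - (k + 1 : ℕ) * h) • A + ((k + 1 : ℕ) * h) • B := by
          ext i j
          simp only [Matrix.add_apply, Matrix.smul_apply, smul_eq_mul]; push_cast; ring
        rw [e1, e2] at this
        have e3 : ((k + 1 : ℕ) : ℝ) * (C * (h * √h)) = k * (C * (h * √h)) + C * (h * √h) := by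
          push_cast; ring
        rw [e3]
        linarith
    have := ind (N + 1) le_rfl
    have e : ((N + 1 : ℕ) : ℝ) * h = 1 := by push_cast; linarith
    rw [e] at this
    simp only [sub_self, zero_smul, one_smul, zero_add] at this
    refine this.trans_eq ?_
    congr 1
    calc _ = (((N + 1 : ℕ) : ℝ) * h) * (C * √h) := by ring
      _ = _ := by rw [e, one_mul]
  have lim : Tendsto (fun N : ℕ => ∫ x, G (khU B p x) ∂(khM B) + C * √(1 / ((N : ℝ) + 1))) atTop
      (nhds (∫ x, G (khU B p x) ∂(khM B) + C * √0)) := by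
    have := (Real.continuous_sqrt.tendsto 0).comp (tendsto_one_div_add_atTop_nhds_zero_nat (𝕜 := ℝ))
    exact (this.const_mul C).const_add _
  have := ge_of_tendsto' lim main
  simpa using this

lemma kh_lip {n : ℕ} {G : ℝ → ℝ} (hGc : ConvexOn ℝ Set.univ G) {L : ℝ}
    (hL : ∀ x y, |G x - G y| ≤ L * |x - y|) {A B : Matrix (Fin n) (Fin n) ℝ}
    (hA : A.PosSemidef) (hB : B.PosSemidef) (hAB : ∀ i j, A i j ≤ B i j)
    {p : Fin n → ℝ} (hp : ∀ i, 0 ≤ p i) :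
    ∫ x, G (khU A p x) ∂(khM A) ≤ ∫ x, G (khU B p x) ∂(khM B) := by
  have hL0 : 0 ≤ L := by
    have := (abs_nonneg _).trans (hL 1 0)
    simpa using this
  have hcont : Continuous G := by
    have : LipschitzWith L.toNNReal G := LipschitzWith.of_dist_le_mul fun x y => by
      simpa [Real.dist_eq, Real.coe_toNNReal _ hL0] using hL x y
    exact this.continuous
  have hgr : ∀ x, 0 ≤ x → |G x| ≤ (|G 0| + L) * (1 + x ^ 1) := by
    intro x hx
    have h1 := hL x 0
    rw [sub_zero, abs_of_nonneg hx] at h1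
    have h2 : |G x| ≤ |G x - G 0| + |G 0| := by
      simpa using abs_add_le (G x - G 0) (G 0)
    nlinarith [abs_nonneg (G 0), mul_nonneg (abs_nonneg (G 0)) hx]
  refine le_of_forall_pos_le_add fun ε hε => ?_
  obtain ⟨H, hH, hHG⟩ := kh_smooth hL hGc (half_pos hε)
  obtain ⟨C, hHgr⟩ := hH.growth
  have k := kh_good hH hA hB hAB hp
  have a : ∫ x, G (khU A p x) ∂(khM A) ≤ ∫ x, H (khU A p x) ∂(khM A) + ε / 2 := by
    have := integral_mono (khU_int hA hp hcont hgr) ((khU_int hA hp hH.1 hHgr).add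
      (integrable_const (ε / 2))) fun x => by
        have := abs_le.1 (hHG (khU A p x))
        simp only [Pi.add_apply]; linarith [this.1]
    simp only [Pi.add_apply] at this
    rw [integral_add (khU_int hA hp hH.1 hHgr) (integrable_const _)] at this
    simpa using this
  have b : ∫ x, H (khU B p x) ∂(khM B) ≤ ∫ x, G (khU B p x) ∂(khM B) + ε / 2 := by
    have := integral_mono (khU_int hB hp hH.1 hHgr) ((khU_int hB hp hcont hgr).add
      (integrable_const (ε / 2))) fun x => by
        have := abs_le.1 (hHG (khU B p x))
        simp only [Pi.add_apply]; linarith [this.2]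
    simp only [Pi.add_apply] at this
    rw [integral_add (khU_int hB hp hcont hgr) (integrable_const _)] at this
    simpa using this
  linarith

lemma khU_pos {n : ℕ} (S : Matrix (Fin n) (Fin n) ℝ) {q : Fin n → ℝ} (hq : ∀ i, 0 ≤ q i)
    {i₀ : Fin n} (hi : 0 < q i₀) (x : EuclideanSpace ℝ (Fin n)) : 0 < khU S q x :=
  Finset.sum_pos' (fun i _ => mul_nonneg (hq i) (Real.exp_pos _).le)
    ⟨i₀, Finset.mem_univ _, mul_pos hi (Real.exp_pos _)⟩

lemma kh_gen {n : ℕ} {F : ℝ → ℝ} (hF : ConvexOn ℝ (Set.Ici 0) F)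
    {C : ℝ} {N : ℕ} (hgr : ∀ x : ℝ, 0 ≤ x → |F x| ≤ C * (1 + x ^ N))
    {A B : Matrix (Fin n) (Fin n) ℝ}
    (hA : A.PosSemidef) (hB : B.PosSemidef) (hAB : ∀ i j, A i j ≤ B i j)
    {p : Fin n → ℝ} (hp : ∀ i, 0 ≤ p i) {i₀ : Fin n} (hi : 0 < p i₀) :
    ∫ x, F (khU A p x) ∂(khM A) ≤ ∫ x, F (khU B p x) ∂(khM B) := by
  obtain ⟨G, hGc, hGL, ⟨a, b, hlow⟩, hup, hlim⟩ := kh_approx hF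
  have hcont : ∀ k, Continuous (G k) := fun k => by
    have := (hGc k).continuousOn_interior
    rwa [interior_univ, continuousOn_univ] at this
  have T : ∀ S : Matrix (Fin n) (Fin n) ℝ, S.PosSemidef →
      Tendsto (fun k => ∫ x, G k (khU S p x) ∂(khM S)) atTop
        (nhds (∫ x, F (khU S p x) ∂(khM S))) := by
    intro S hS
    refine tendsto_integral_of_dominated_convergence
      (fun x => (|a| * khU S p x ^ 1 + |b|) + C * (1 + khU S p x ^ N))
      (fun k => ((hcont k).comp (khU_cont S p)).aestronglyMeasurable) ?_ ?_ ?_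
    · exact (((khU_pow_int hS hp 1).const_mul _).add (integrable_const _)).add
        (((integrable_const 1).add (khU_pow_int hS hp N)).const_mul C)
    · intro k
      refine Eventually.of_forall fun x => ?_
      have hx := khU_pos S hp hi x
      have h1 := hlow k _ hx
      have h2 := hup k _ hx
      have h3 := abs_le.1 (hgr _ hx.le)
      have h4 : -|a| * khU S p x ≤ a * khU S p x := by
        gcongr; exact neg_abs_le a
      have h5 := neg_abs_le b
      have h6 := (abs_nonneg _).trans (hgr _ hx.le)
      have h7 : 0 ≤ |a| * khU S p x := by positivity
      rw [Real.norm_eq_abs, pow_one, abs_le]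
      constructor <;> linarith [h3.1, h3.2, abs_nonneg b]
    · exact Eventually.of_forall fun x => hlim _ (khU_pos S hp hi x)
  refine le_of_tendsto_of_tendsto' (T A hA) (T B hB) fun k => ?_
  obtain ⟨L, hL⟩ := hGL k
  exact kh_lip (hGc k) hL hA hB hAB hp

lemma kh_second {Ω : Type*} [MeasurableSpace Ω] {P : Measure Ω} [IsProbabilityMeasure P]
    {Z : Ω → ℝ} (hZ : Measurable Z) {v : NNReal} (h : P.map Z = gaussianReal 0 v) :
    MemLp Z 2 P ∧ ∫ ω, Z ω ^ 2 ∂P = v := by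
  have h1 : MemLp id 2 (P.map Z) := by
    rw [h]; exact memLp_id_gaussianReal' 2 (by simp)
  refine ⟨(memLp_map_measure_iff (by fun_prop) hZ.aemeasurable).1 h1, ?_⟩
  have h2 : ∫ x, x ^ 2 ∂(P.map Z) = ∫ ω, Z ω ^ 2 ∂P :=
    integral_map hZ.aemeasurable (by fun_prop)
  rw [← h2, h]
  have h3 := variance_id_gaussianReal (μ := 0) (v := v)
  rw [variance_of_integral_eq_zero (by fun_prop) (by simp [integral_id_gaussianReal])] at h3
  simpa using h3

lemma kh_transfer {Ω : Type*} [MeasurableSpace Ω] {P : Measure Ω} [IsProbabilityMeasure P]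
    {n : ℕ} {A : Fin n → Ω → ℝ} (hm : ∀ i, Measurable (A i))
    (hA : IsCenteredGaussianFamily P A) {S : Matrix (Fin n) (Fin n) ℝ}
    (hS : ∀ i j, S i j = ∫ ω, A i ω * A j ω ∂P) :
    S.PosSemidef ∧ P.map (fun ω => WithLp.toLp 2 (fun i => A i ω)) = khM S := by
  have hL : ∀ i, MemLp (A i) 2 P := fun i => by
    obtain ⟨v, hv⟩ := hA 1 (fun _ => i) (fun _ => 1)
    simp only [Finset.univ_unique, Finset.sum_const, Finset.card_singleton, one_smul, one_mul]
      at hv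
    exact (kh_second (hm i) hv).1
  have hint : ∀ i j, Integrable (fun ω => A i ω * A j ω) P := fun i j =>
    (hL i).integrable_mul (hL j)
  have key : ∀ c : Fin n → ℝ, ∃ v : NNReal,
      P.map (fun ω => ∑ i, c i * A i ω) = gaussianReal 0 v ∧ (v : ℝ) = c ⬝ᵥ S *ᵥ c := by
    intro c
    obtain ⟨v, hv⟩ := hA n id c
    refine ⟨v, hv, ?_⟩
    rw [← (kh_second (by simp only [id]; fun_prop) hv).2]
    have e1 : ∀ ω, (∑ i, c i * A (id i) ω) ^ 2
        = ∑ i, ∑ j, c i * c j * (A i ω * A j ω) := by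
      intro ω
      rw [sq, Finset.sum_mul_sum]
      refine Finset.sum_congr rfl fun i _ => Finset.sum_congr rfl fun j _ => ?_
      simp only [id]; ring
    simp_rw [e1]
    rw [integral_finsetSum _ (fun i _ => integrable_finsetSum _ fun j _ =>
      (hint i j).const_mul _)]
    simp only [dotProduct, Matrix.mulVec, Finset.mul_sum]
    refine Finset.sum_congr rfl fun i _ => ?_
    rw [integral_finsetSum _ (fun j _ => (hint i j).const_mul _)]
    refine Finset.sum_congr rfl fun j _ => ?_
    rw [integral_const_mul, hS]; ring
  have hpsd : S.PosSemidef := by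
    refine .of_dotProduct_mulVec_nonneg ?_ (fun x => ?_)
    · ext i j
      simp only [Matrix.conjTranspose_apply, star_trivial, hS]
      simp_rw [mul_comm]
    · obtain ⟨v, _, hv⟩ := key x
      rw [star_trivial, ← hv]; exact v.2
  refine ⟨hpsd, ?_⟩
  have hmm : Measurable (fun ω => WithLp.toLp 2 (fun i => A i ω)) := by fun_prop
  have : IsProbabilityMeasure (P.map (fun ω => WithLp.toLp 2 (fun i => A i ω))) :=
    Measure.isProbabilityMeasure_map hmm.aemeasurable
  apply Measure.ext_of_charFun
  ext t
  rw [charFun_multivariateGaussian hpsd]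
  obtain ⟨v, hv, hv2⟩ := key t
  have h1 := charFun_gaussianReal (μ := 0) (v := v) 1
  rw [← hv, charFun_apply, integral_map (by fun_prop) (by fun_prop)] at h1
  rw [charFun_apply, integral_map hmm.aemeasurable (by fun_prop), ← hv2]
  convert h1 using 1
  · congr 1; ext ω; congr 3
    simp [PiLp.inner_apply]
  · simp

lemma kh_transfer_int {Ω : Type*} [MeasurableSpace Ω] {P : Measure Ω} [IsProbabilityMeasure P]
    {n : ℕ} {A : Fin n → Ω → ℝ} (hm : ∀ i, Measurable (A i))
    (hA : IsCenteredGaussianFamily P A) {S : Matrix (Fin n) (Fin n) ℝ}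
    (hS : ∀ i j, S i j = ∫ ω, A i ω * A j ω ∂P)
    {F : ℝ → ℝ} (hF : ConvexOn ℝ (Set.Ici 0) F)
    {p : Fin n → ℝ} (hp : ∀ i, 0 ≤ p i) {i₀ : Fin n} (hi : 0 < p i₀) :
    ∫ ω, F (∑ i, p i * Real.exp (A i ω - (∫ ω', (A i ω') ^ 2 ∂P) / 2)) ∂P
      = ∫ x, F (khU S p x) ∂(khM S) := by
  have hmm : Measurable (fun ω => WithLp.toLp 2 (fun i => A i ω)) := by fun_prop
  have hc : Continuous (fun x => F (khU S p x)) := by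
    have h := hF.continuousOn_interior
    rw [interior_Ici] at h
    exact h.comp_continuous (khU_cont S p) (fun x => khU_pos S hp hi x)
  rw [← (kh_transfer hm hA hS).2, integral_map hmm.aemeasurable hc.aestronglyMeasurable]
  simp only [khU, hS, sq]

lemma kh_main {Ω : Type*} [MeasurableSpace Ω] {P : Measure Ω} [IsProbabilityMeasure P]
    {n : ℕ} {A B : Fin n → Ω → ℝ}
    (hAm : ∀ i, Measurable (A i)) (hBm : ∀ i, Measurable (B i))
    (hA : IsCenteredGaussianFamily P A) (hB : IsCenteredGaussianFamily P B)
    (hcov : ∀ i j, ∫ ω, A i ω * A j ω ∂P ≤ ∫ ω, B i ω * B j ω ∂P)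
    {p : Fin n → ℝ} (hp : ∀ i, 0 ≤ p i)
    {F : ℝ → ℝ} (hF : ConvexOn ℝ (Set.Ici 0) F)
    {C : ℝ} {N : ℕ} (hgr : ∀ x : ℝ, 0 ≤ x → |F x| ≤ C * (1 + x ^ N)) :
    ∫ ω, F (∑ i, p i * Real.exp (A i ω - (∫ ω', (A i ω') ^ 2 ∂P) / 2)) ∂P ≤
        ∫ ω, F (∑ i, p i * Real.exp (B i ω - (∫ ω', (B i ω') ^ 2 ∂P) / 2)) ∂P := by
  by_cases h : ∃ i, 0 < p i
  · obtain ⟨i₀, hi⟩ := h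
    rw [kh_transfer_int hAm hA
        (S := Matrix.of fun i j => ∫ ω, A i ω * A j ω ∂P) (fun i j => rfl) hF hp hi,
      kh_transfer_int hBm hB
        (S := Matrix.of fun i j => ∫ ω, B i ω * B j ω ∂P) (fun i j => rfl) hF hp hi]
    exact kh_gen hF hgr (kh_transfer hAm hA fun i j => rfl).1
      (kh_transfer hBm hB fun i j => rfl).1 hcov hp hi
  · have h0 : ∀ i, p i = 0 := fun i => le_antisymm (not_lt.1 fun hh => h ⟨i, hh⟩) (hp i)
    simp [h0]

end KahaneHelpers

/-- **Kahane's convexity inequalities.** If `(A_i)` and `(B_i)` are centered Gaussian vectors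
with `E[A_i A_j] ≤ E[B_i B_j]`, then for all nonnegative weights `p_i` and every convex
function `F : [0,∞) → ℝ` of at most polynomial growth,
`E[F(Σ p_i e^{A_i − E[A_i²]/2})] ≤ E[F(Σ p_i e^{B_i − E[B_i²]/2})]`,
and the reverse inequality for concave `F`. -/
theorem kahane_convexity_inequalities
    {Ω : Type*} [MeasurableSpace Ω] (P : Measure Ω) [IsProbabilityMeasure P]
    (n : ℕ) (hn : 1 ≤ n)
    (A B : Fin n → Ω → ℝ)
    (hAmeas : ∀ i, Measurable (A i)) (hBmeas : ∀ i, Measurable (B i))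
    (hAgauss : IsCenteredGaussianFamily P A)
    (hBgauss : IsCenteredGaussianFamily P B)
    (hcov : ∀ i j, ∫ ω, A i ω * A j ω ∂P ≤ ∫ ω, B i ω * B j ω ∂P)
    (p : Fin n → ℝ) (hp : ∀ i, 0 ≤ p i) :
    (∀ F : ℝ → ℝ, ConvexOn ℝ (Set.Ici 0) F →
      (∃ (C : ℝ) (N : ℕ), ∀ x : ℝ, 0 ≤ x → |F x| ≤ C * (1 + x ^ N)) →
      ∫ ω, F (∑ i, p i * Real.exp (A i ω - (∫ ω', (A i ω') ^ 2 ∂P) / 2)) ∂P ≤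
        ∫ ω, F (∑ i, p i * Real.exp (B i ω - (∫ ω', (B i ω') ^ 2 ∂P) / 2)) ∂P) ∧
    (∀ F : ℝ → ℝ, ConcaveOn ℝ (Set.Ici 0) F →
      (∃ (C : ℝ) (N : ℕ), ∀ x : ℝ, 0 ≤ x → |F x| ≤ C * (1 + x ^ N)) →
      ∫ ω, F (∑ i, p i * Real.exp (B i ω - (∫ ω', (B i ω') ^ 2 ∂P) / 2)) ∂P ≤
        ∫ ω, F (∑ i, p i * Real.exp (A i ω - (∫ ω', (A i ω') ^ 2 ∂P) / 2)) ∂P) := by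
  refine ⟨?_, ?_⟩
  · rintro F hF ⟨C, N, hgr⟩
    exact kh_main hAmeas hBmeas hAgauss hBgauss hcov hp hF hgr
  · rintro F hF ⟨C, N, hgr⟩
    have h := kh_main hAmeas hBmeas hAgauss hBgauss hcov hp hF.neg (C := C) (N := N)
      (fun x hx => by simpa using hgr x hx)
    simp only [Pi.neg_apply, integral_neg] at h
    linarith
end
end

section
/- σ-positive type of the truncated logarithmic kernel in dimension at most 2: Let d ∈ {1,2} and T > 0. Then there exists a sequence (K_k)_{k≥1} of continuous functions K_k : ℝ^d × ℝ^d → [0,∞), each positive semidefinite (i.e. Σ_{i,j} c_i c_j K_k(x_i,x_j) ≥ 0 for all finite families x_1,…,x_m ∈ ℝ^d and c_1,…,c_m ∈ ℝ), such that Σ_{k=1}^∞ K_k(x,y) = ln₊(T/|x−y|) for all x ≠ y in ℝ^d, and Σ_{k=1}^∞ K_k(x,x) = +∞ for all x. -/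
open MeasureTheory Filter

noncomputable section

section aux
open Real

def J0 (z : ℝ) : ℝ := ∫ θ in (-π)..π, cos (z * cos θ)
def J1 (z : ℝ) : ℝ := ∫ θ in (-π)..π, cos θ * sin (z * cos θ)
def J2 (z : ℝ) : ℝ := ∫ θ in (-π)..π, cos θ ^ 2 * cos (z * cos θ)

lemma hasDerivAt_J0 (z : ℝ) : HasDerivAt J0 (-J1 z) z := by
  have h := intervalIntegral.hasDerivAt_integral_of_dominated_loc_of_deriv_le
    (μ := volume) (a := -π) (b := π) (s := Set.univ) (x₀ := z)
    (F := fun z θ => cos (z * cos θ)) (F' := fun z θ => -(cos θ * sin (z * cos θ)))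
    (bound := fun _ => 1) Filter.univ_mem
    (Eventually.of_forall fun x => by
      apply Continuous.aestronglyMeasurable; fun_prop)
    (by apply Continuous.intervalIntegrable; fun_prop)
    (by apply Continuous.aestronglyMeasurable; fun_prop)
    (Eventually.of_forall fun t _ x _ => by
      rw [norm_neg, norm_mul]
      exact mul_le_one₀ (abs_cos_le_one _) (norm_nonneg _) (abs_sin_le_one _))
    (by simp)
    (Eventually.of_forall fun t _ x _ => by
      exact (((hasDerivAt_id x).mul_const (cos t)).cos).congr_deriv (by simp; ring))
  have h2 := h.2
  rw [intervalIntegral.integral_neg] at h2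
  exact h2

lemma hasDerivAt_J1 (z : ℝ) : HasDerivAt J1 (J2 z) z := by
  have h := intervalIntegral.hasDerivAt_integral_of_dominated_loc_of_deriv_le
    (μ := volume) (a := -π) (b := π) (s := Set.univ) (x₀ := z)
    (F := fun z θ => cos θ * sin (z * cos θ)) (F' := fun z θ => (cos θ ^ 2 * cos (z * cos θ)))
    (bound := fun _ => 1) Filter.univ_mem
    (Eventually.of_forall fun x => by
      apply Continuous.aestronglyMeasurable; fun_prop)
    (by apply Continuous.intervalIntegrable; fun_prop)
    (by apply Continuous.aestronglyMeasurable; fun_prop)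
    (Eventually.of_forall fun t _ x _ => by
      rw [norm_mul, norm_pow]
      exact mul_le_one₀ (pow_le_one₀ (norm_nonneg _) (abs_cos_le_one _)) (norm_nonneg _) (abs_cos_le_one _))
    (by simp)
    (Eventually.of_forall fun t _ x _ => by
      exact ((((hasDerivAt_id x).mul_const (cos t)).sin).const_mul (cos t)).congr_deriv (by simp; ring))
  exact h.2

lemma J_rel (z : ℝ) : z * J2 z = z * J0 z - J1 z := by
  have key : ∫ θ in (-π)..π, (cos θ * sin (z * cos θ) - z * (sin θ ^ 2 * cos (z * cos θ))) = 0 := by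
    rw [intervalIntegral.integral_eq_sub_of_hasDerivAt (f := fun θ => sin θ * sin (z * cos θ))]
    · simp
    · intro x _
      exact ((hasDerivAt_sin x).mul (((hasDerivAt_cos x).const_mul z).sin)).congr_deriv (by ring)
    · apply Continuous.intervalIntegrable; fun_prop
  have e : ∀ θ : ℝ, (cos θ * sin (z * cos θ) - z * (sin θ ^ 2 * cos (z * cos θ)))
     = cos θ * sin (z * cos θ) - z * cos (z * cos θ) + z * (cos θ ^ 2 * cos (z * cos θ)) := by
    intro θ; rw [sin_sq]; ring
  simp_rw [e] at key
  rw [intervalIntegral.integral_add, intervalIntegral.integral_sub,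
    intervalIntegral.integral_const_mul, intervalIntegral.integral_const_mul] at key
  · change J1 z - z * J0 z + z * J2 z = 0 at key
    linarith
  all_goals apply Continuous.intervalIntegrable; fun_prop

lemma hasDerivAt_J1' {z : ℝ} (hz : 0 < z) : HasDerivAt J1 (J0 z - J1 z / z) z := by
  have := hasDerivAt_J1 z
  convert this using 1
  have := J_rel z
  field_simp
  linarith

lemma continuous_J0 : Continuous J0 := continuous_iff_continuousAt.2 fun z => (hasDerivAt_J0 z).continuousAt
lemma continuous_J1 : Continuous J1 := continuous_iff_continuousAt.2 fun z => (hasDerivAt_J1 z).continuousAt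

lemma J1_zero : J1 0 = 0 := by simp [J1]

lemma J1_pos {z : ℝ} (hz : 0 < z) (hz' : z ≤ 1) : 0 < J1 z := by
  have hs : ∀ c : ℝ, -1 ≤ c → c ≤ 1 → 0 ≤ c * sin (z * c) := by
    intro c h1 h2
    have := pi_gt_three
    rcases le_total 0 c with h | h
    · exact mul_nonneg h (sin_nonneg_of_nonneg_of_le_pi (by positivity) (by nlinarith))
    · exact mul_nonneg_of_nonpos_of_nonpos h (sin_nonpos_of_nonpos_of_neg_pi_le (by nlinarith) (by nlinarith))
  apply intervalIntegral.integral_pos (by linarith [pi_pos])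
  · fun_prop
  · intro θ _; exact hs _ (neg_one_le_cos _) (cos_le_one _)
  · refine ⟨0, ⟨by linarith [pi_pos], pi_pos.le⟩, ?_⟩
    have := pi_gt_three
    simp; exact sin_pos_of_pos_of_lt_pi hz (by linarith)

lemma abs_J1_le (z : ℝ) (hz : 0 ≤ z) : |J1 z| ≤ 2 * π * z := by
  have := intervalIntegral.norm_integral_le_of_norm_le_const (a := -π) (b := π) (C := z)
    (f := fun θ => cos θ * sin (z * cos θ)) (fun θ _ => by
      rw [norm_mul]
      have h1 : ‖sin (z * cos θ)‖ ≤ z := by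
        refine abs_sin_le_abs.trans ?_
        rw [abs_mul, abs_of_nonneg hz]
        exact mul_le_of_le_one_right hz (abs_cos_le_one _)
      calc _ ≤ 1 * z := mul_le_mul (abs_cos_le_one _) h1 (norm_nonneg _) zero_le_one
        _ = z := one_mul z)
  rw [abs_of_nonneg (by linarith [pi_pos])] at this
  change |J1 z| ≤ _ at this
  linarith

lemma abs_J0_le (z : ℝ) : |J0 z| ≤ 2 * π := by
  have := intervalIntegral.norm_integral_le_of_norm_le_const (a := -π) (b := π) (C := 1)
    (f := fun θ => cos (z * cos θ)) (fun θ _ => abs_cos_le_one _)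
  rw [abs_of_nonneg (by linarith [pi_pos])] at this
  change |J0 z| ≤ _ at this
  linarith

def FF (x : ℝ) : ℝ := ∫ s in (0:ℝ)..x, √s * J1 s

lemma continuous_u : Continuous (fun s => √s * J1 s) := by
  have := continuous_J1
  fun_prop

lemma hasDerivAt_FF (x : ℝ) : HasDerivAt FF (√x * J1 x) x :=
  intervalIntegral.integral_hasDerivAt_right (continuous_u.intervalIntegrable _ _)
    (continuous_u.stronglyMeasurableAtFilter _ _) continuous_u.continuousAt

lemma continuous_FF : Continuous FF := continuous_iff_continuousAt.2 fun z => (hasDerivAt_FF z).continuousAt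

lemma FF_pos_small {x : ℝ} (hx : 0 < x) (hx' : x ≤ 1) : 0 < FF x := by
  apply intervalIntegral.integral_pos hx continuous_u.continuousOn
  · intro s hs
    exact mul_nonneg (sqrt_nonneg _) (J1_pos hs.1 (hs.2.trans hx')).le
  · exact ⟨x, ⟨hx.le, le_rfl⟩, mul_pos (sqrt_pos.2 hx) (J1_pos hx hx')⟩

lemma abs_FF_le {x : ℝ} (hx : 0 < x) : |FF x| ≤ 2 * π * √x * x ^ 2 := by
  have := intervalIntegral.norm_integral_le_of_norm_le_const (a := 0) (b := x) (C := √x * (2 * π * x))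
    (f := fun s => √s * J1 s) (fun s hs => by
      rw [Set.uIoc_of_le hx.le] at hs
      rw [norm_mul, norm_of_nonneg (sqrt_nonneg _)]
      refine mul_le_mul (sqrt_le_sqrt hs.2) ((abs_J1_le s hs.1.le).trans ?_) (norm_nonneg _) (sqrt_nonneg _)
      have := pi_pos
      gcongr
      exact hs.2)
  rw [sub_zero, abs_of_pos hx] at this
  change |FF x| ≤ _ at this
  linarith

def HH (x : ℝ) : ℝ := 2 * FF x * (√x * J0 x - J1 x / (2 * √x)) - (√x * J1 x) ^ 2
  + (1 - 3 / (4 * x ^ 2)) * FF x ^ 2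

lemma hasDerivAt_HH {x : ℝ} (hx : 0 < x) : HasDerivAt HH (3 / (2 * x ^ 3) * FF x ^ 2) x := by
  have hs : 0 < √x := sqrt_pos.2 hx
  have d1 := hasDerivAt_FF x
  have ds := hasDerivAt_sqrt hx.ne'
  have dJ0 := hasDerivAt_J0 x
  have dJ1 := hasDerivAt_J1' hx
  have dq : HasDerivAt (fun x : ℝ => 1 - 3 / (4 * x ^ 2)) (3 / (2 * x ^ 3)) x := by
    have := (((hasDerivAt_pow 2 x).const_mul 4).fun_inv (by positivity)).const_mul 3 |>.const_sub 1
    refine (this.congr_deriv ?_)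
    field_simp
    norm_num
    ring
  have := (((d1.const_mul 2).mul ((ds.mul dJ0).sub (dJ1.div (ds.const_mul 2) (by positivity)))).sub
    ((ds.mul dJ1).pow 2)).add (dq.mul (d1.pow 2))
  refine this.congr_deriv ?_
  simp only [Pi.mul_apply, Pi.pow_apply, Pi.sub_apply, Pi.div_apply]
  obtain ⟨p, hp, rfl⟩ : ∃ p : ℝ, 0 < p ∧ p ^ 2 = x := ⟨√x, hs, sq_sqrt hx.le⟩
  rw [sqrt_sq hp.le]
  generalize FF (p ^ 2) = f
  generalize J0 (p ^ 2) = a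
  generalize J1 (p ^ 2) = b
  field_simp
  ring

lemma HH_lower {x : ℝ} (hx : 0 < x) (hx1 : x ≤ 1) : -(100 * π ^ 2) * x ≤ HH x := by
  have hF := abs_FF_le hx
  have h0 := abs_J0_le x
  have h1 := abs_J1_le x hx.le
  have hs : 0 < √x := sqrt_pos.2 hx
  unfold HH
  obtain ⟨p, hp, rfl⟩ : ∃ p : ℝ, 0 < p ∧ p ^ 2 = x := ⟨√x, hs, sq_sqrt hx.le⟩
  rw [sqrt_sq hp.le] at *
  generalize FF (p ^ 2) = f at *
  generalize J0 (p ^ 2) = a at *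
  generalize J1 (p ^ 2) = b at *
  have hπ := pi_pos
  have hp1 : p ≤ 1 := by nlinarith
  have e1 : |p * a - b / (2 * p)| ≤ 3 * π * p := by
    have : |b / (2 * p)| ≤ π * p := by
      rw [abs_div, abs_of_pos (by positivity : 0 < 2 * p), div_le_iff₀ (by positivity)]
      linarith
    have h3 : |p * a| ≤ p * (2 * π) := by
      rw [abs_mul, abs_of_pos hp]; gcongr
    calc _ ≤ |p * a| + |b / (2 * p)| := abs_sub _ _
      _ ≤ _ := by linarith
  have e2 : |f * (p * a - b / (2 * p))| ≤ (2 * π * p * (p^2)^2) * (3 * π * p) := by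
    rw [abs_mul]; gcongr
  have e3 : (p * b) ^ 2 ≤ (p * (2 * π * p ^ 2)) ^ 2 := by
    rw [← sq_abs (p * b), abs_mul, abs_of_pos hp]; gcongr
  have e4 : f ^ 2 ≤ (2 * π * p * (p^2)^2) ^ 2 := by
    rw [← sq_abs f]; gcongr
  have e5 : 3 / (4 * (p^2) ^ 2) * f ^ 2 ≤ 3 / (4 * (p^2) ^ 2) * (2 * π * p * (p^2)^2) ^ 2 := by gcongr
  have e6 : 3 / (4 * (p^2) ^ 2) * (2 * π * p * (p^2)^2) ^ 2 = 3 * π ^ 2 * p ^ 6 := by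
    field_simp; ring
  have e7 : p ^ 6 ≤ p ^ 2 := pow_le_pow_of_le_one hp.le hp1 (by norm_num)
  have e8 : π ^ 2 * p ^ 6 ≤ π ^ 2 * p ^ 2 := by gcongr
  have := (abs_le.1 e2).1
  nlinarith [sq_nonneg f, sq_nonneg (π * p)]

lemma HH_mono : MonotoneOn HH (Set.Ioi 0) := by
  apply monotoneOn_of_deriv_nonneg (convex_Ioi 0)
  · intro x hx; exact (hasDerivAt_HH hx).continuousAt.continuousWithinAt
  · intro x hx
    rw [interior_Ioi] at hx
    exact (hasDerivAt_HH hx).differentiableAt.differentiableWithinAt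
  · intro x hx
    rw [interior_Ioi] at hx
    rw [(hasDerivAt_HH hx).deriv]
    have : 0 < x := hx
    positivity

lemma HH_half_nonneg : 0 ≤ HH (1/2) := by
  have ht : Tendsto (fun x : ℝ => -(100 * π ^ 2) * x) (nhdsWithin 0 (Set.Ioi 0)) (nhds 0) := by
    have : Tendsto (fun x : ℝ => -(100 * π ^ 2) * x) (nhds 0) (nhds (-(100 * π ^ 2) * 0)) :=
      tendsto_id.const_mul _
    rw [mul_zero] at this
    exact this.mono_left nhdsWithin_le_nhds
  refine le_of_tendsto ht ?_
  filter_upwards [Ioc_mem_nhdsGT (show (0:ℝ) < 1/2 by norm_num)] with x hx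
  exact (HH_lower hx.1 (by linarith [hx.2])).trans (HH_mono hx.1 (by norm_num) hx.2)

lemma HH_one_pos : 0 < HH 1 := by
  refine HH_half_nonneg.trans_lt ?_
  have : StrictMonoOn HH (Set.Icc (1/2) 1) := by
    apply strictMonoOn_of_deriv_pos (convex_Icc _ _)
    · intro x hx; exact (hasDerivAt_HH (by linarith [hx.1])).continuousAt.continuousWithinAt
    · intro x hx
      rw [interior_Icc] at hx
      have h0 : 0 < x := by linarith [hx.1]
      rw [(hasDerivAt_HH h0).deriv]
      have := FF_pos_small h0 hx.2.le
      positivity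
  exact this ⟨by norm_num, by norm_num⟩ ⟨by norm_num, by norm_num⟩ (by norm_num)

lemma FF_pos {x : ℝ} (hx : 0 < x) : 0 < FF x := by
  rcases le_or_gt x 1 with h | h
  · exact FF_pos_small hx h
  by_contra! hF
  obtain ⟨c, hc, hc0⟩ := intermediate_value_Icc' h.le continuous_FF.continuousOn
    ⟨hF, (FF_pos_small one_pos le_rfl).le⟩
  have h1 : 0 < HH c := HH_one_pos.trans_le (HH_mono (by simp) (by simp; linarith [hc.1]) hc.1)
  unfold HH at h1
  rw [hc0] at h1
  nlinarith [sq_nonneg (√c * J1 c)]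

lemma M_nonneg {ρ : ℝ} (hρ : 0 ≤ ρ) : 0 ≤ ∫ r in (0:ℝ)..1, (1 - √r) * (r * J0 (ρ * r)) := by
  have c0 := continuous_J0
  have c1 := continuous_J1
  have cF := continuous_FF
  rcases hρ.eq_or_lt with rfl | hρ
  · apply intervalIntegral.integral_nonneg zero_le_one
    intro r hr
    have h1 : √r ≤ 1 := sqrt_le_one.2 hr.2
    have h2 : J0 (0 * r) = 2 * π := by simp [J0]; ring
    rw [h2]
    exact mul_nonneg (by linarith) (mul_nonneg hr.1 (by positivity))
  have key := intervalIntegral.integral_eq_sub_of_hasDerivAt_of_le (a := 0) (b := 1) zero_le_one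
    (f := fun r => (1 - √r) * (r * J1 (ρ * r)) / ρ + 1 / (2 * ρ ^ 2 * √ρ) * FF (ρ * r))
    (f' := fun r => (1 - √r) * (r * J0 (ρ * r))) (by fun_prop) (fun r hr => by
      have hr0 : 0 < r := hr.1
      have dm : HasDerivAt (fun r : ℝ => ρ * r) ρ r := by
        simpa using (hasDerivAt_id r).const_mul ρ
      have ds := (hasDerivAt_sqrt hr0.ne').const_sub 1
      have dJ := (hasDerivAt_J1' (mul_pos hρ hr0)).comp r dm
      have dF := ((hasDerivAt_FF (ρ * r)).comp r dm).const_mul (1 / (2 * ρ ^ 2 * √ρ))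
      have := ((ds.mul ((hasDerivAt_id r).mul dJ)).div_const ρ).add dF
      refine this.congr_deriv ?_
      simp only [Pi.mul_apply, id, Function.comp]
      rw [sqrt_mul hρ.le]
      generalize J0 (ρ * r) = a
      generalize J1 (ρ * r) = b
      obtain ⟨p, hp, rfl⟩ : ∃ p : ℝ, 0 < p ∧ p ^ 2 = r := ⟨√r, sqrt_pos.2 hr0, sq_sqrt hr0.le⟩
      have := sqrt_pos.2 hρ
      rw [sqrt_sq hp.le]
      field_simp
      ring) (by apply Continuous.intervalIntegrable; fun_prop)
  rw [key]
  have h0 : FF 0 = 0 := by simp [FF]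
  have h1 := FF_pos hρ
  simp [h0]
  positivity

def gg (r : ℝ) : ℝ := max (1 - √r) 0

lemma continuous_gg : Continuous gg := by unfold gg; fun_prop

lemma gg_nonneg (r : ℝ) : 0 ≤ gg r := le_max_right _ _

lemma gg_eq_zero {r : ℝ} (hr : 1 ≤ r) : gg r = 0 := by
  unfold gg
  have : 1 ≤ √r := one_le_sqrt.2 hr
  exact max_eq_right (by linarith)

lemma gg_eq {r : ℝ} (hr : r ≤ 1) : gg r = 1 - √r := by
  unfold gg
  have : √r ≤ 1 := sqrt_le_one.2 hr
  exact max_eq_left (by linarith)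

lemma hasCompactSupport_gg : HasCompactSupport (fun z : ℂ => gg ‖z‖) := by
  apply HasCompactSupport.intro (isCompact_closedBall (0:ℂ) 1)
  intro z hz
  apply gg_eq_zero
  simp at hz; exact hz.le

lemma J0_shift (z θ₀ : ℝ) : ∫ θ in (-π)..π, cos (z * cos (θ - θ₀)) = J0 z := by
  have := intervalIntegral.integral_comp_sub_right (a := -π) (b := π) (fun θ => cos (z * cos θ)) θ₀
  rw [this]
  have hp : Function.Periodic (fun θ => cos (z * cos θ)) (2 * π) := by
    intro θ; simp
  have := hp.intervalIntegral_add_eq (-π - θ₀) (-π)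
  unfold J0
  convert this using 2 <;> ring

lemma fourier_re (w : ℂ) : 0 ≤ ∫ v : ℂ, cos (2 * π * inner ℝ v w) * gg ‖v‖ := by
  rw [← Complex.integral_comp_polarCoord_symm]
  have hin : ∀ p : ℝ × ℝ, inner ℝ (Complex.polarCoord.symm p) w
      = p.1 * (‖w‖ * cos (p.2 - Complex.arg w)) := by
    intro p
    rw [Complex.polarCoord_symm_apply, Complex.inner, cos_sub]
    simp only [Complex.mul_re, Complex.conj_re, Complex.conj_im, Complex.mul_im, Complex.ofReal_re, Complex.ofReal_im, Complex.add_re, Complex.add_im, Complex.I_re, Complex.I_im]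
    linear_combination (-p.1 * cos p.2) * (Complex.norm_mul_cos_arg w) + (-p.1 * sin p.2) * (Complex.norm_mul_sin_arg w)
  have hset : polarCoord.target = Set.Ioi (0:ℝ) ×ˢ Set.Ioo (-π) π := rfl
  have cg := continuous_gg
  have : ∫ p in polarCoord.target, p.1 • (cos (2 * π * inner ℝ (Complex.polarCoord.symm p) w) * gg ‖Complex.polarCoord.symm p‖)
     = ∫ p in Set.Ioc (0:ℝ) 1 ×ˢ Set.Ioo (-π) π, p.1 * (cos ((2 * π * ‖w‖ * p.1) * cos (p.2 - Complex.arg w)) * gg p.1) := by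
    rw [hset]
    rw [← setIntegral_eq_of_subset_of_forall_sdiff_eq_zero
      (s := Set.Ioc (0:ℝ) 1 ×ˢ Set.Ioo (-π) π) (t := Set.Ioi (0:ℝ) ×ˢ Set.Ioo (-π) π)
      (f := fun p => p.1 * (cos ((2 * π * ‖w‖ * p.1) * cos (p.2 - Complex.arg w)) * gg p.1))]
    · apply setIntegral_congr_fun (measurableSet_Ioi.prod measurableSet_Ioo)
      rintro p ⟨hp, -⟩
      have hp : 0 < p.1 := hp
      simp only [smul_eq_mul]
      rw [hin, Complex.norm_polarCoord_symm, abs_of_pos hp]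
      ring_nf
    · exact measurableSet_Ioi.prod measurableSet_Ioo
    · exact Set.prod_mono (fun x hx => hx.1) le_rfl
    · rintro p ⟨⟨h1, h2⟩, h3⟩
      have : 1 ≤ p.1 := by
        by_contra! h
        exact h3 ⟨⟨h1, h.le⟩, h2⟩
      rw [gg_eq_zero this]; simp
  rw [this, Measure.volume_eq_prod, setIntegral_prod]
  · have e : ∀ r ∈ Set.Ioc (0:ℝ) 1, ∫ θ in Set.Ioo (-π) π, r * (cos ((2 * π * ‖w‖ * r) * cos (θ - Complex.arg w)) * gg r)
       = (1 - √r) * (r * J0 (2 * π * ‖w‖ * r)) := by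
      intro r hr
      rw [← integral_Ioc_eq_integral_Ioo, ← intervalIntegral.integral_of_le (by linarith [pi_pos]),
        intervalIntegral.integral_const_mul, intervalIntegral.integral_mul_const, J0_shift, gg_eq hr.2]
      ring
    rw [setIntegral_congr_fun measurableSet_Ioc e, ← intervalIntegral.integral_of_le zero_le_one]
    exact M_nonneg (by positivity)
  · rw [← Measure.volume_eq_prod]
    apply IntegrableOn.mono_set (t := Set.Icc (0:ℝ) 1 ×ˢ Set.Icc (-π) π)
    · apply ContinuousOn.integrableOn_compact (isCompact_Icc.prod isCompact_Icc)
      fun_prop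
    · exact Set.prod_mono Set.Ioc_subset_Icc_self Set.Ioo_subset_Icc_self

lemma integrable_phi : Integrable (fun z : ℂ => (gg ‖z‖ : ℂ)) := by
  have := continuous_gg
  apply Continuous.integrable_of_hasCompactSupport (by fun_prop)
  exact hasCompactSupport_gg.comp_left (g := Complex.ofReal) Complex.ofReal_zero

open scoped FourierTransform in
lemma fourier_phi_re (w : ℂ) : 0 ≤ (𝓕 (fun z : ℂ => (gg ‖z‖ : ℂ)) w).re := by
  have := fourier_re w
  rw [Real.fourier_eq']
  have h : (∫ v : ℂ, Complex.exp (((-2 * π * inner ℝ v w : ℝ) : ℂ) * Complex.I) • (gg ‖v‖ : ℂ)).re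
    = ∫ v : ℂ, (Complex.exp (((-2 * π * inner ℝ v w : ℝ) : ℂ) * Complex.I) • (gg ‖v‖ : ℂ)).re := by
    refine (integral_re (𝕜 := ℂ) ?_).symm
    refine integrable_phi.bdd_mul (c := 1) ?_ (Eventually.of_forall fun v => ?_)
    · apply Continuous.aestronglyMeasurable
      fun_prop
    · rw [Complex.norm_exp_ofReal_mul_I]
  rw [h]
  refine this.trans_eq (integral_congr_ae (Eventually.of_forall fun v => ?_))
  simp only []
  rw [smul_eq_mul, Complex.re_mul_ofReal, Complex.exp_ofReal_mul_I_re, ← cos_neg]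
  congr 2; ring

open scoped FourierTransform in
lemma tendsto_reg (v : ℂ) : Tendsto (fun t : ℝ => ∫ w : ℂ,
    Complex.exp (- (t:ℂ)⁻¹ * ‖w‖ ^ 2 + 2 * π * Complex.I * (inner ℝ v w : ℝ)) • 
      (𝓕 (fun z : ℂ => (gg ‖z‖ : ℂ)) w)) atTop (nhds (gg ‖v‖ : ℂ)) := by
  have hc : Continuous (fun z : ℂ => (gg ‖z‖ : ℂ)) := by
    have := continuous_gg
    fun_prop
  have h := Real.tendsto_integral_gaussian_smul' integrable_phi (v := v) hc.continuousAt
  apply h.congr'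
  filter_upwards [Ioi_mem_atTop 0] with c (hc : 0 < c)
  have J : Integrable (fun w : ℂ ↦ Complex.exp (- (c:ℂ)⁻¹ * ‖w‖ ^ 2 + 2 * π * Complex.I * (inner ℝ v w : ℝ))) :=
      GaussianFourier.integrable_cexp_neg_mul_sq_norm_add (by simpa) _ _
  have := (VectorFourier.integral_fourierIntegral_smul_eq_flip (L := innerₗ ℂ)
      Real.continuous_fourierChar continuous_inner J integrable_phi)
  rw [flip_innerₗ] at this
  refine Eq.trans ?_ this
  congr with w
  change _ = 𝓕 (fun w : ℂ ↦ Complex.exp (- (c:ℂ)⁻¹ * ‖w‖ ^ 2 + 2 * π * Complex.I * (inner ℝ v w : ℝ))) w • _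
  rw [fourier_gaussian_innerProductSpace' (by simpa)]
  congr 2
  congr 1
  · simp
  · congr 1
    simp only [div_inv_eq_mul]; ring

open scoped FourierTransform in
lemma integrable_reg (v : ℂ) {t : ℝ} (ht : 0 < t) : Integrable (fun w : ℂ =>
    Complex.exp (- (t:ℂ)⁻¹ * ‖w‖ ^ 2 + 2 * π * Complex.I * (inner ℝ v w : ℝ)) • 
      (𝓕 (fun z : ℂ => (gg ‖z‖ : ℂ)) w)) := by
  have J : Integrable (fun w : ℂ ↦ Complex.exp (- (t:ℂ)⁻¹ * ‖w‖ ^ 2 + 2 * π * Complex.I * (inner ℝ v w : ℝ))) :=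
      GaussianFourier.integrable_cexp_neg_mul_sq_norm_add (by simpa) _ _
  have hcont : Continuous (𝓕 (fun z : ℂ => (gg ‖z‖ : ℂ))) :=
    VectorFourier.fourierIntegral_continuous Real.continuous_fourierChar
      (by exact continuous_inner) integrable_phi
  refine J.mul_bdd (c := ∫ z : ℂ, ‖(gg ‖z‖ : ℂ)‖) hcont.aestronglyMeasurable
    (Eventually.of_forall fun w => ?_)
  exact VectorFourier.norm_fourierIntegral_le_integral_norm _ _ _ _ _

open scoped FourierTransform in
lemma psd_gg (m : ℕ) (z : Fin m → ℂ) (c : Fin m → ℝ) :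
    0 ≤ ∑ i, ∑ j, c i * c j * gg ‖z i - z j‖ := by
  have ht : Tendsto (fun t : ℝ => (∑ i, ∑ j, ((c i * c j : ℝ) : ℂ) * ∫ w : ℂ,
    Complex.exp (- (t:ℂ)⁻¹ * ‖w‖ ^ 2 + 2 * π * Complex.I * (inner ℝ (z i - z j) w : ℝ)) • 
      (𝓕 (fun z : ℂ => (gg ‖z‖ : ℂ)) w)).re) atTop
      (nhds (∑ i, ∑ j, ((c i * c j : ℝ) : ℂ) * (gg ‖z i - z j‖ : ℂ)).re) := by
    refine (Complex.continuous_re.tendsto _).comp ?_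
    refine tendsto_finsetSum _ fun i _ => tendsto_finsetSum _ fun j _ => ?_
    exact (tendsto_reg _).const_mul _
  have he : (∑ i, ∑ j, ((c i * c j : ℝ) : ℂ) * (gg ‖z i - z j‖ : ℂ)).re
     = ∑ i, ∑ j, c i * c j * gg ‖z i - z j‖ := by
    rw [← Complex.ofReal_re (∑ i, ∑ j, c i * c j * gg ‖z i - z j‖)]
    push_cast; rfl
  rw [he] at ht
  refine ge_of_tendsto ht ?_
  filter_upwards [Ioi_mem_atTop 0] with t (ht : 0 < t)
  simp_rw [← integral_const_mul]
  have hint : ∀ i j, Integrable (fun w : ℂ => ((c i * c j : ℝ) : ℂ) * 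
    (Complex.exp (- (t:ℂ)⁻¹ * ‖w‖ ^ 2 + 2 * π * Complex.I * (inner ℝ (z i - z j) w : ℝ)) • 
      (𝓕 (fun z : ℂ => (gg ‖z‖ : ℂ)) w))) := fun i j => (integrable_reg _ ht).const_mul _
  have e1 : ∀ i, ∑ j, ∫ w : ℂ, ((c i * c j : ℝ) : ℂ) * 
    (Complex.exp (- (t:ℂ)⁻¹ * ‖w‖ ^ 2 + 2 * π * Complex.I * (inner ℝ (z i - z j) w : ℝ)) • 
      (𝓕 (fun z : ℂ => (gg ‖z‖ : ℂ)) w)) = ∫ w : ℂ, ∑ j, ((c i * c j : ℝ) : ℂ) * 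
    (Complex.exp (- (t:ℂ)⁻¹ * ‖w‖ ^ 2 + 2 * π * Complex.I * (inner ℝ (z i - z j) w : ℝ)) • 
      (𝓕 (fun z : ℂ => (gg ‖z‖ : ℂ)) w)) := fun i => (integral_finsetSum _ fun j _ => hint i j).symm
  simp_rw [e1]
  rw [← integral_finsetSum _ fun i _ => integrable_finsetSum _ fun j _ => hint i j]
  have hre := integral_re (𝕜 := ℂ) (integrable_finsetSum Finset.univ (fun i _ => integrable_finsetSum Finset.univ fun j _ => hint i j))
  change _ = Complex.re _ at hre
  rw [← hre]
  apply integral_nonneg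
  intro w
  change 0 ≤ Complex.re _
  have hfac : ∑ i, ∑ j, ((c i * c j : ℝ) : ℂ) * 
    (Complex.exp (- (t:ℂ)⁻¹ * ‖w‖ ^ 2 + 2 * π * Complex.I * (inner ℝ (z i - z j) w : ℝ)) • 
      (𝓕 (fun z : ℂ => (gg ‖z‖ : ℂ)) w))
     = ((Real.exp (- t⁻¹ * ‖w‖ ^ 2) * Complex.normSq (∑ i, (c i : ℂ) * Complex.exp (((2 * π * inner ℝ (z i) w : ℝ) : ℂ) * Complex.I)) : ℝ) : ℂ) * (𝓕 (fun z : ℂ => (gg ‖z‖ : ℂ)) w) := by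
    rw [Complex.ofReal_mul, ← Complex.mul_conj, map_sum, Finset.sum_mul_sum, Finset.mul_sum, Finset.sum_mul]
    refine Finset.sum_congr rfl fun i _ => ?_
    rw [Finset.mul_sum, Finset.sum_mul]
    refine Finset.sum_congr rfl fun j _ => ?_
    rw [map_mul, Complex.conj_ofReal, ← Complex.exp_conj, map_mul, Complex.conj_I, Complex.conj_ofReal,
      inner_sub_left, smul_eq_mul]
    have : Complex.exp (- (t:ℂ)⁻¹ * ‖w‖ ^ 2 + 2 * π * Complex.I * ((inner ℝ (z i) w - inner ℝ (z j) w : ℝ) : ℂ))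
      = ((Real.exp (- t⁻¹ * ‖w‖ ^ 2) : ℝ) : ℂ) * (Complex.exp (((2 * π * inner ℝ (z i) w : ℝ) : ℂ) * Complex.I) *
         Complex.exp (((2 * π * inner ℝ (z j) w : ℝ) : ℂ) * -Complex.I)) := by
      rw [Complex.ofReal_exp, ← Complex.exp_add, ← Complex.exp_add]
      congr 1
      push_cast
      ring
    rw [this]
    push_cast
    ring
  rw [hfac, Complex.re_ofReal_mul]
  exact mul_nonneg (mul_nonneg (Real.exp_nonneg _) (Complex.normSq_nonneg _)) (fourier_phi_re w)

def kap (T : ℝ) : ℕ → ℝ → ℝ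
  | 0, r => 2 * gg (T⁻¹ * r)
  | k + 1, r => 2 * ∫ t in (k:ℝ)..(k + 1 : ℕ), gg (T⁻¹ * Real.exp (2 * t) * r)

lemma kap_nonneg (T : ℝ) (k : ℕ) (r : ℝ) : 0 ≤ kap T k r := by
  cases k with
  | zero => exact mul_nonneg zero_le_two (gg_nonneg _)
  | succ k =>
    refine mul_nonneg zero_le_two (intervalIntegral.integral_nonneg (by simp) fun t _ => gg_nonneg _)

lemma continuous_kap (T : ℝ) (k : ℕ) : Continuous (kap T k) := by
  have := continuous_gg
  cases k with
  | zero => unfold kap; fun_prop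
  | succ k =>
    unfold kap
    apply Continuous.mul continuous_const
    apply intervalIntegral.continuous_parametric_intervalIntegral_of_continuous'
    fun_prop

lemma psd_gg_scale {s : ℝ} (hs : 0 ≤ s) (m : ℕ) (z : Fin m → ℂ) (c : Fin m → ℝ) :
    0 ≤ ∑ i, ∑ j, c i * c j * gg (s * ‖z i - z j‖) := by
  have := psd_gg m (fun i => s • z i) c
  simpa only [← smul_sub, norm_smul, norm_of_nonneg hs] using this

lemma psd_kap {T : ℝ} (hT : 0 < T) (k m : ℕ) (z : Fin m → ℂ) (c : Fin m → ℝ) :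
    0 ≤ ∑ i, ∑ j, c i * c j * kap T k ‖z i - z j‖ := by
  have cg := continuous_gg
  cases k with
  | zero =>
    have := psd_gg_scale (inv_nonneg.2 hT.le) m z c
    have e : ∑ i, ∑ j, c i * c j * kap T 0 ‖z i - z j‖
      = 2 * ∑ i, ∑ j, c i * c j * gg (T⁻¹ * ‖z i - z j‖) := by
      simp only [kap, Finset.mul_sum]
      refine Finset.sum_congr rfl fun i _ => Finset.sum_congr rfl fun j _ => by ring
    rw [e]; positivity
  | succ k =>
    have e : ∑ i, ∑ j, c i * c j * kap T (k + 1) ‖z i - z j‖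
      = 2 * ∫ t in (k:ℝ)..(k + 1 : ℕ), ∑ i, ∑ j, c i * c j * gg (T⁻¹ * Real.exp (2 * t) * ‖z i - z j‖) := by
      rw [intervalIntegral.integral_finsetSum, Finset.mul_sum]
      · refine Finset.sum_congr rfl fun i _ => ?_
        rw [intervalIntegral.integral_finsetSum, Finset.mul_sum]
        · refine Finset.sum_congr rfl fun j _ => ?_
          rw [intervalIntegral.integral_const_mul]
          simp only [kap]; ring
        · intro j _; apply Continuous.intervalIntegrable; fun_prop
      · intro j _; apply Continuous.intervalIntegrable; fun_prop
    rw [e]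
    refine mul_nonneg zero_le_two (intervalIntegral.integral_nonneg (by simp) fun t _ => ?_)
    exact psd_gg_scale (by positivity) m z c

lemma sum_kap (T r : ℝ) (n : ℕ) : ∑ k ∈ Finset.range (n + 1), kap T k r
    = 2 * gg (T⁻¹ * r) + 2 * ∫ t in (0:ℝ)..n, gg (T⁻¹ * Real.exp (2 * t) * r) := by
  have cg := continuous_gg
  rw [Finset.sum_range_succ']
  have := intervalIntegral.sum_integral_adjacent_intervals (n := n) (a := fun k => (k : ℝ)) (μ := volume)
    (f := fun t => gg (T⁻¹ * Real.exp (2 * t) * r))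
    (fun k _ => by apply Continuous.intervalIntegrable; fun_prop)
  rw [Nat.cast_zero] at this
  rw [← this, Finset.mul_sum, add_comm]
  rfl

lemma sum_kap_zero (T : ℝ) (n : ℕ) : ∑ k ∈ Finset.range (n + 1), kap T k 0 = 2 + 2 * n := by
  rw [sum_kap]
  have : gg 0 = 1 := by simp [gg]
  simp [this]

lemma sum_kap_pos {T r : ℝ} (hT : 0 < T) (hr : 0 < r) :
    ∀ᶠ n : ℕ in atTop, ∑ k ∈ Finset.range (n + 1), kap T k r = max (Real.log (T / r)) 0 := by
  have cg := continuous_gg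
  obtain ⟨q, hq⟩ : ∃ q, q = T⁻¹ * r := ⟨_, rfl⟩
  have hq0 : 0 < q := by rw [hq]; positivity
  have hlog : Real.log (T / r) = - Real.log q := by
    rw [hq, ← Real.log_inv]; congr 1; field_simp
  have e : ∀ t, T⁻¹ * Real.exp (2 * t) * r = q * Real.exp (2 * t) := by intro t; rw [hq]; ring
  simp_rw [sum_kap, e, ← hq, hlog]
  obtain ⟨τ, hτ⟩ : ∃ τ, τ = - Real.log q / 2 := ⟨_, rfl⟩
  have hexp : q = Real.exp (-2 * τ) := by
    rw [hτ, show -2 * (-Real.log q / 2) = Real.log q by ring, Real.exp_log hq0]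
  have hlq : Real.log q = -2 * τ := by rw [hτ]; ring
  rw [hlq]
  have hbig : ∀ t, τ ≤ t → gg (q * Real.exp (2 * t)) = 0 := by
    intro t ht
    apply gg_eq_zero
    rw [hexp, ← Real.exp_add]
    exact Real.one_le_exp (by linarith)
  rcases le_or_gt τ 0 with h | h
  · refine Eventually.of_forall fun n => ?_
    have h1 : ∫ t in (0:ℝ)..n, gg (q * Real.exp (2 * t)) = 0 := by
      rw [intervalIntegral.integral_congr (g := fun _ => 0)]
      · simp
      · intro t ht
        rw [Set.uIcc_of_le (by positivity)] at ht
        exact hbig t (h.trans ht.1)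
    have h2 := hbig 0 h
    simp only [mul_zero, Real.exp_zero, mul_one] at h2
    rw [h1, h2, max_eq_right (by linarith)]
    simp
  · filter_upwards [eventually_ge_atTop ⌈τ⌉₊] with n hn
    have hn : τ ≤ n := (Nat.le_ceil τ).trans (by exact_mod_cast hn)
    rw [← intervalIntegral.integral_add_adjacent_intervals (b := τ)]
    rotate_left
    · apply Continuous.intervalIntegrable; fun_prop
    · apply Continuous.intervalIntegrable; fun_prop
    have h1 : ∫ t in τ..n, gg (q * Real.exp (2 * t)) = 0 := by
      rw [intervalIntegral.integral_congr (g := fun _ => 0)]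
      · simp
      · intro t ht
        rw [Set.uIcc_of_le hn] at ht
        exact hbig t ht.1
    have hsq : ∀ t, √(q * Real.exp (2 * t)) = Real.exp (t - τ) := by
      intro t
      rw [hexp, ← Real.exp_add, show -2 * τ + 2 * t = (t - τ) + (t - τ) by ring, Real.exp_add,
        Real.sqrt_mul_self (Real.exp_nonneg _)]
    have hsm : ∀ t, t ≤ τ → gg (q * Real.exp (2 * t)) = 1 - Real.exp (t - τ) := by
      intro t ht
      rw [gg_eq, hsq]
      rw [hexp, ← Real.exp_add]
      exact Real.exp_le_one_iff.2 (by linarith)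
    have h2 : ∫ t in (0:ℝ)..τ, gg (q * Real.exp (2 * t)) = τ - 1 + Real.exp (-τ) := by
      rw [intervalIntegral.integral_congr (g := fun t => 1 - Real.exp (t - τ))]
      · rw [intervalIntegral.integral_eq_sub_of_hasDerivAt (f := fun t => t - Real.exp (t - τ))]
        · simp <;> ring
        · intro t _
          exact ((hasDerivAt_id t).sub ((hasDerivAt_id t).sub_const τ).exp).congr_deriv (by simp)
        · apply Continuous.intervalIntegrable; fun_prop
      · intro t ht
        rw [Set.uIcc_of_le h.le] at ht
        exact hsm t ht.2
    have h3 := hsm 0 h.le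
    simp only [mul_zero, Real.exp_zero, mul_one, zero_sub] at h3
    rw [h1, h2, h3, max_eq_left (by linarith)]
    ring

lemma tsum_kap_pos {T r : ℝ} (hT : 0 < T) (hr : 0 < r) :
    ∑' k, ENNReal.ofReal (kap T k r) = ENNReal.ofReal (max (Real.log (T / r)) 0) := by
  have h1 := (ENNReal.tendsto_nat_tsum (fun k => ENNReal.ofReal (kap T k r))).comp (tendsto_add_atTop_nat 1)
  refine tendsto_nhds_unique h1 (tendsto_const_nhds.congr' ?_)
  filter_upwards [sum_kap_pos hT hr] with n hn
  simp only [Function.comp]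
  rw [← ENNReal.ofReal_sum_of_nonneg (fun k _ => kap_nonneg _ _ _), hn]

lemma tsum_kap_zero (T : ℝ) : ∑' k, ENNReal.ofReal (kap T k 0) = ⊤ := by
  have h1 := (ENNReal.tendsto_nat_tsum (fun k => ENNReal.ofReal (kap T k 0))).comp (tendsto_add_atTop_nat 1)
  have h2 : Tendsto (fun n : ℕ => ENNReal.ofReal (2 + 2 * (n:ℝ))) atTop (nhds ⊤) := by
    apply ENNReal.tendsto_ofReal_atTop.comp
    apply tendsto_atTop_add_const_left
    exact tendsto_natCast_atTop_atTop.const_mul_atTop two_pos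
  refine tendsto_nhds_unique h1 (h2.congr fun n => ?_)
  simp only [Function.comp]
  rw [← ENNReal.ofReal_sum_of_nonneg (fun k _ => kap_nonneg _ _ _), sum_kap_zero]

lemma exists_isometry (d : ℕ) (hd : d = 1 ∨ d = 2) :
    ∃ f : EuclideanSpace ℝ (Fin d) → ℂ, ∀ x y, ‖f x - f y‖ = ‖x - y‖ := by
  rcases hd with rfl | rfl
  · refine ⟨fun x => ((x 0 : ℝ) : ℂ), fun x y => ?_⟩
    rw [← Complex.ofReal_sub, Complex.norm_real, EuclideanSpace.norm_eq]
    simp [Real.sqrt_sq_eq_abs]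
  · refine ⟨fun x => Complex.orthonormalBasisOneI.repr.symm x, fun x y => ?_⟩
    rw [← map_sub, LinearIsometryEquiv.norm_map]

end aux

/-- **σ-positive type of the truncated logarithmic kernel in dimension at most 2.**
For `d ∈ {1,2}` and `T > 0`, the kernel `(x,y) ↦ ln₊(T/|x−y|)` on `ℝ^d` is of σ-positive
type: it is the pointwise sum of a sequence of continuous, nonnegative, positive semidefinite
kernels (summing to `+∞` on the diagonal). -/
theorem lnplus_kernel_sigma_positive
    (d : ℕ) (hd : d = 1 ∨ d = 2) (T : ℝ) (hT : 0 < T) :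
    ∃ K : ℕ → EuclideanSpace ℝ (Fin d) → EuclideanSpace ℝ (Fin d) → ℝ,
      (∀ k, Continuous (fun p : EuclideanSpace ℝ (Fin d) × EuclideanSpace ℝ (Fin d) =>
        K k p.1 p.2)) ∧
      (∀ k x y, 0 ≤ K k x y) ∧
      (∀ (k m : ℕ) (x : Fin m → EuclideanSpace ℝ (Fin d)) (c : Fin m → ℝ),
        0 ≤ ∑ i, ∑ j, c i * c j * K k (x i) (x j)) ∧
      (∀ x y : EuclideanSpace ℝ (Fin d), x ≠ y →
        (∑' k : ℕ, ENNReal.ofReal (K k x y)) =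
          ENNReal.ofReal (max (Real.log (T / ‖x - y‖)) 0)) ∧
      (∀ x : EuclideanSpace ℝ (Fin d), (∑' k : ℕ, ENNReal.ofReal (K k x x)) = ⊤) := by
  obtain ⟨f, hf⟩ := exists_isometry d hd
  refine ⟨fun k x y => kap T k ‖x - y‖, fun k => ?_, fun k x y => kap_nonneg _ _ _,
    fun k m x c => ?_, fun x y hxy => ?_, fun x => ?_⟩
  · exact (continuous_kap T k).comp (by fun_prop)
  · simpa only [hf] using psd_kap hT k m (fun i => f (x i)) c
  · exact tsum_kap_pos hT (norm_pos_iff.2 (sub_ne_zero.2 hxy))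
  · simpa using tsum_kap_zero T
end
end
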